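/- (Okada's criterion, rational-valued case.) Let q ≥ 2 be an integer and let f : ℕ → ℚ be periodic with period q and satisfy Σ_{a=1}^q f(a) = 0, so that L(1,f) = Σ_{n≥1} f(n)/n converges. Let M(q) be the set of positive integers all of whose prime factors divide q, and for a prime p dividing q and an integer r ≥ 1 define ε(r,p) = v_p(r) if v_p(r) < v_p(q), and ε(r,p) = v_p(q) + 1/(p-1) otherwise, where v_p denotes the p-adic valuation. Then L(1,f) = 0 if and only if both of the following hold: (i) Σ_{m ∈ M(q)} f(am)/m = 0 for every integer a with 1 ≤ a < q and gcd(a,q) = 1; and (ii) Σ_{1 ≤ r ≤ q, gcd(r,q) > 1} f(r)·ε(r,p) = 0 for every prime divisor p of q. -/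

import Mathlib

open Filter Topology Finset

lemma okb_divide_one {N : ℕ} (f : ℂ → ℂ) (hf : Differentiable ℂ f) (t : ℂ)
    (h : (N : ℕ∞) ≤ analyticOrderAt f t) :
    ∃ g : ℂ → ℂ, Differentiable ℂ g ∧ ∀ z, f z = (z - t) ^ N * g z := by
  induction N generalizing f with
  | zero => exact ⟨f, hf, by simp⟩
  | succ N ih =>
    have hfa : AnalyticAt ℂ f t := hf.analyticAt t
    have h0 : f t = 0 := by
      apply apply_eq_zero_of_analyticOrderAt_ne_zero
      intro h1
      rw [h1] at h
      simp at h
    have hd : Differentiable ℂ (dslope f t) := by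
      rw [← differentiableOn_univ] at hf ⊢
      exact (Complex.differentiableOn_dslope (by simp)).2 hf
    have hfac : ∀ z, f z = (z - t) * dslope f t z := by
      intro z
      have := sub_smul_dslope f t z
      simp only [smul_eq_mul, h0, sub_zero] at this
      exact this.symm
    have hord : (N : ℕ∞) ≤ analyticOrderAt (dslope f t) t := by
      have e1 : f = (fun z => z - t) * dslope f t := by
        funext z; exact hfac z
      have hida : AnalyticAt ℂ (fun z : ℂ => z - t) t := by fun_prop
      have h2 := analyticOrderAt_mul hida (hd.analyticAt t)
      rw [← e1] at h2
      have h3 : analyticOrderAt (fun z : ℂ => z - t) t = 1 := by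
        apply hida.analyticOrderAt_eq_one_of_zero_deriv_ne_zero
        · simp
        · simp
      rw [h2, h3, Nat.cast_add, Nat.cast_one, add_comm] at h
      exact (ENat.add_le_add_iff_left (by simp)).1 h
    obtain ⟨g, hg, hg2⟩ := ih _ hd hord
    exact ⟨g, hg, fun z => by rw [hfac, hg2]; ring⟩

lemma okb_divide {N : ℕ} (f : ℂ → ℂ) (hf : Differentiable ℂ f) (A : Finset ℂ)
    (h : ∀ t ∈ A, (N : ℕ∞) ≤ analyticOrderAt f t) :
    ∃ g : ℂ → ℂ, Differentiable ℂ g ∧ ∀ z, f z = (∏ t ∈ A, (z - t) ^ N) * g z := by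
  classical
  induction A using Finset.induction_on with
  | empty => exact ⟨f, hf, by simp⟩
  | insert a A ha ih =>
    obtain ⟨g, hg, hfg⟩ := ih (fun t ht => h t (by simp [ht]))
    have hpa : AnalyticAt ℂ (fun z : ℂ => ∏ t ∈ A, (z - t) ^ N) a := by
      apply Differentiable.analyticAt
      fun_prop
    have hord : (N : ℕ∞) ≤ analyticOrderAt g a := by
      have e1 : f = (fun z => ∏ t ∈ A, (z - t) ^ N) * g := by
        funext z; exact hfg z
      have h2 := analyticOrderAt_mul hpa (hg.analyticAt a)
      rw [← e1] at h2
      have h3 : analyticOrderAt (fun z : ℂ => ∏ t ∈ A, (z - t) ^ N) a = 0 := by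
        rw [hpa.analyticOrderAt_eq_zero, Finset.prod_ne_zero_iff]
        intro t ht
        apply pow_ne_zero
        rw [sub_ne_zero]
        rintro rfl
        exact ha ht
      rw [h3, zero_add] at h2
      rw [← h2]
      exact h a (by simp)
    obtain ⟨k, hk, hgk⟩ := okb_divide_one g hg a hord
    refine ⟨k, hk, fun z => ?_⟩
    rw [hfg, hgk, Finset.prod_insert ha]; ring

lemma okb_schwarz {N : ℕ} (f : ℂ → ℂ) (hf : Differentiable ℂ f) (A : Finset ℂ)
    (h : ∀ t ∈ A, ∀ m < N, iteratedDeriv m f t = 0) (S R M : ℝ) (hS : 1 ≤ S)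
    (hA : ∀ t ∈ A, ‖t‖ ≤ S) (hR : 2 * S ≤ R) (hM : ∀ z, ‖z‖ ≤ R → ‖f z‖ ≤ M) :
    ‖iteratedDeriv N f 0‖ ≤ N.factorial * (M * (2 * (S + 1) / R) ^ (N * A.card)) := by
  have hR0 : 0 < R := by linarith
  have hM0 : 0 ≤ M := (norm_nonneg _).trans (hM 0 (by simpa using hR0.le))
  obtain ⟨g, hg, hfg⟩ := okb_divide (N := N) f hf A (fun t ht =>
    (natCast_le_analyticOrderAt_iff_iteratedDeriv_eq_zero (hf.analyticAt t)).2 (h t ht))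
  have hgb : ∀ z : ℂ, ‖z‖ ≤ R → ‖g z‖ ≤ M * (2 / R) ^ (N * A.card) := by
    intro z hz
    have hball : z ∈ closure (Metric.ball (0 : ℂ) R) := by
      rw [closure_ball _ hR0.ne']; simpa using hz
    refine Complex.norm_le_of_forall_mem_frontier_norm_le Metric.isBounded_ball
      hg.diffContOnCl (fun w hw => ?_) hball
    rw [frontier_ball _ hR0.ne'] at hw
    have hw : ‖w‖ = R := by simpa using hw
    have h1 : (R / 2) ^ (N * A.card) ≤ ‖∏ t ∈ A, (w - t) ^ N‖ := by
      rw [norm_prod, pow_mul, ← Finset.prod_const]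
      apply Finset.prod_le_prod
      · intro i hi; positivity
      · intro t ht
        rw [norm_pow]
        gcongr
        have := norm_sub_norm_le w t
        have := hA t ht
        linarith
    have h2 := hM w hw.le
    rw [hfg, norm_mul] at h2
    have h3 : (R / 2) ^ (N * A.card) * ‖g w‖ ≤ M :=
      (mul_le_mul_of_nonneg_right h1 (norm_nonneg _)).trans h2
    have h4 : (2 / R) ^ (N * A.card) * (R / 2) ^ (N * A.card) = 1 := by
      rw [← mul_pow]
      have : 2 / R * (R / 2) = 1 := by field_simp
      rw [this, one_pow]
    calc ‖g w‖ = (2 / R) ^ (N * A.card) * ((R / 2) ^ (N * A.card) * ‖g w‖) := by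
          rw [← mul_assoc, h4, one_mul]
      _ ≤ (2 / R) ^ (N * A.card) * M := by gcongr
      _ = _ := mul_comm _ _
  have key := Complex.norm_iteratedDeriv_le_of_forall_mem_sphere_norm_le (c := 0) (R := 1)
    (C := M * (2 * (S + 1) / R) ^ (N * A.card)) (f := f) N one_pos hf.diffContOnCl ?_
  · simpa using key
  · intro z hz
    have hz : ‖z‖ = 1 := by simpa using hz
    rw [hfg, norm_mul]
    have h1 : ‖∏ t ∈ A, (z - t) ^ N‖ ≤ (S + 1) ^ (N * A.card) := by
      rw [norm_prod, pow_mul, ← Finset.prod_const]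
      apply Finset.prod_le_prod
      · intro i hi; positivity
      · intro t ht
        rw [norm_pow]
        gcongr
        have := norm_sub_le z t
        have := hA t ht
        linarith
    calc _ ≤ (S + 1) ^ (N * A.card) * (M * (2 / R) ^ (N * A.card)) := by
          gcongr
          exact hgb z (by linarith)
      _ = _ := by
        rw [show 2 * (S + 1) / R = (S + 1) * (2 / R) by ring, mul_pow]; ring

lemma okb_iter {ι : Type*} [Fintype ι] (W ω : ι → ℂ) (m : ℕ) :
    iteratedDeriv m (fun z : ℂ => ∑ a, W a * Complex.exp (z * ω a)) =
      fun z => ∑ a, W a * ω a ^ m * Complex.exp (z * ω a) := by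
  induction m with
  | zero => simp
  | succ m ih =>
    rw [iteratedDeriv_succ, ih]
    funext z
    have : HasDerivAt (fun z : ℂ => ∑ a, W a * ω a ^ m * Complex.exp (z * ω a))
        (∑ a, W a * ω a ^ m * (Complex.exp (z * ω a) * (1 * ω a))) z := by
      apply HasDerivAt.fun_sum
      intro a _
      exact (((hasDerivAt_id z).mul_const (ω a)).cexp).const_mul _
    rw [this.deriv]
    refine Finset.sum_congr rfl fun a _ => ?_
    ring

lemma okb_list_prod {J M : Type*} [CommMonoid M] [DecidableEq J] (l : List J) (f : J → M) (i : J) :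
    (l.map f).prod = f i ^ (l.count i) * ((l.filter (fun k => k ≠ i)).map f).prod := by
  induction l with
  | nil => simp
  | cons a l ih =>
    by_cases h : a = i
    · subst h
      simp [ih, pow_succ', mul_assoc]
    · simp [h, ih, mul_left_comm]

lemma okb_list_len {J : Type*} [DecidableEq J] (l : List J) (i : J) :
    l.length = l.count i + (l.filter (fun k => k ≠ i)).length := by
  induction l with
  | nil => simp
  | cons a l ih =>
    by_cases h : a = i
    · subst h
      simp [ih]; omega
    · simp [h, ih]; omega

lemma okb_pigeon {J : Type*} [DecidableEq J] [Fintype J] [Nonempty J] (l : List J) :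
    ∃ i, l.length ≤ Fintype.card J * l.count i := by
  by_contra! h
  have h1 : ∑ i : J, l.count i = l.length := by
    have := Multiset.sum_count_eq_card (s := Finset.univ) (m := (l : Multiset J)) (by simp)
    simpa using this
  have h2 : ∑ i : J, (Fintype.card J * l.count i) < ∑ i : J, l.length :=
    Finset.sum_lt_sum_of_nonempty univ_nonempty (fun i _ => h i)
  rw [← Finset.mul_sum, h1] at h2
  simp at h2

/-- change of linear forms: vanishing -/
lemma okb_change_zero {ι I J : Type*} [Fintype ι] [Fintype I] (X : I → ι → ℂ) (Y : J → ι → ℂ)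
    (m : J → I → ℂ) (hY : ∀ j a, Y j a = ∑ g, m j g * X g a) (W : ι → ℂ) (n : ℕ)
    (hX : ∀ l : List I, l.length < n → ∑ a, W a * (l.map (fun g => X g a)).prod = 0)
    (l : List J) : ∀ l' : List I, l'.length + l.length < n →
      ∑ a, W a * ((l'.map (fun g => X g a)).prod * (l.map (fun j => Y j a)).prod) = 0 := by
  induction l with
  | nil => intro l' h; simpa using hX l' (by simpa using h)
  | cons j l ih =>
    intro l' h
    have : ∀ a, W a * ((l'.map (fun g => X g a)).prod * ((j :: l).map (fun j => Y j a)).prod) =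
        ∑ g, m j g * (W a * (((g :: l').map (fun g => X g a)).prod *
          (l.map (fun j => Y j a)).prod)) := by
      intro a
      simp only [List.map_cons, List.prod_cons, hY j a]
      rw [Finset.sum_mul, Finset.mul_sum, Finset.mul_sum]
      refine Finset.sum_congr rfl fun g _ => ?_
      ring
    simp_rw [this]
    rw [Finset.sum_comm]
    refine Finset.sum_eq_zero fun g _ => ?_
    rw [← Finset.mul_sum, ih (g :: l') (by simp at h ⊢; omega), mul_zero]

/-- change of linear forms: bounds -/
lemma okb_change_bound {ι I J : Type*} [Fintype ι] [Fintype J] (X : I → ι → ℂ) (Y : J → ι → ℂ)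
    (m : I → J → ℂ) (hX : ∀ g a, X g a = ∑ j, m g j * Y j a) (W : ι → ℂ) (n : ℕ)
    (C D : ℝ) (hC : ∀ g, ∑ j, ‖m g j‖ ≤ C) (hD0 : 0 ≤ D)
    (hY : ∀ l : List J, l.length = n → ‖∑ a, W a * (l.map (fun j => Y j a)).prod‖ ≤ D)
    (l : List I) : ∀ l' : List J, l'.length + l.length = n →
      ‖∑ a, W a * ((l'.map (fun j => Y j a)).prod * (l.map (fun g => X g a)).prod)‖
        ≤ C ^ l.length * D := by
  induction l with
  | nil => intro l' h; simpa using hY l' (by simpa using h)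
  | cons g l ih =>
    intro l' h
    have : ∀ a, W a * ((l'.map (fun g => Y g a)).prod * ((g :: l).map (fun j => X j a)).prod) =
        ∑ j, m g j * (W a * (((j :: l').map (fun g => Y g a)).prod *
          (l.map (fun j => X j a)).prod)) := by
      intro a
      simp only [List.map_cons, List.prod_cons, hX g a]
      rw [Finset.sum_mul, Finset.mul_sum, Finset.mul_sum]
      refine Finset.sum_congr rfl fun g _ => ?_
      ring
    simp_rw [this]
    rw [Finset.sum_comm]
    have hC0 : 0 ≤ C := (Finset.sum_nonneg fun j _ => norm_nonneg _).trans (hC g)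
    calc _ ≤ ∑ j, ‖m g j‖ * (C ^ l.length * D) := by
          apply norm_sum_le_of_le
          intro j _
          rw [← Finset.mul_sum, norm_mul]
          gcongr
          exact ih (j :: l') (by simp at h ⊢; omega)
      _ ≤ C * (C ^ l.length * D) := by
          rw [← Finset.sum_mul]; gcongr; exact hC g
      _ = _ := by simp [pow_succ]; ring

open NumberField in
lemma okb_house_le {K : Type} [Field K] [NumberField K] {x : K} {A : ℝ} (hA : 0 ≤ A)
    (h : ∀ φ : K →+* ℂ, ‖φ x‖ ≤ A) : house x ≤ A :=
  (pi_norm_le_iff_of_nonneg hA).2 h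

open NumberField in
lemma okb_siegel (K : Type) [Field K] [NumberField K] : ∃ C : ℝ, 1 ≤ C ∧
    ∀ (α β : Type) [Fintype α] [Fintype β] (a : Matrix α β (𝓞 K)), a ≠ 0 →
      0 < Fintype.card α → 2 * Fintype.card α ≤ Fintype.card β → ∀ A : ℝ, 1 ≤ A →
      (∀ k l, ∀ φ : K →+* ℂ, ‖φ (a k l)‖ ≤ A) →
      ∃ ξ : β → 𝓞 K, ξ ≠ 0 ∧ a.mulVec ξ = 0 ∧
        ∀ l, ∀ φ : K →+* ℂ, ‖φ (ξ l)‖ ≤ C * (Fintype.card β * A) := by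
  classical
  have h1 : ∃ c : ℝ, ∀ (α β : Type) [Fintype α] [Fintype β] (a : Matrix α β (𝓞 K)), a ≠ 0 →
      0 < Fintype.card α → Fintype.card α < Fintype.card β → ∀ A : ℝ,
      (∀ k l, house ((algebraMap (𝓞 K) K) (a k l)) ≤ A) →
      ∃ ξ : β → 𝓞 K, ξ ≠ 0 ∧ a.mulVec ξ = 0 ∧
        ∀ l, house (ξ l : K) ≤ c * (c * (Fintype.card β : ℝ) * A) ^
          ((Fintype.card α : ℝ) / ((Fintype.card β : ℝ) - (Fintype.card α : ℝ))) :=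
    ⟨_, fun α β _ _ a ha h0 h1 A hA =>
      house.exists_ne_zero_int_vec_house_le K a ha h0 h1 rfl hA rfl⟩
  obtain ⟨c, hc⟩ := h1
  refine ⟨(|c| + 1) * (|c| + 1), by nlinarith [abs_nonneg c], ?_⟩
  intro α β _ _ a ha h0 hab A hA hφ
  obtain ⟨ξ, hξ0, hξ, hb⟩ := hc α β a ha h0 (by omega) A (by
    intro k l
    exact okb_house_le (by linarith) (hφ k l))
  refine ⟨ξ, hξ0, hξ, fun l φ => ?_⟩
  refine (norm_embedding_le_house _ φ).trans ((hb l).trans ?_)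
  set q := (Fintype.card β : ℝ)
  set p := (Fintype.card α : ℝ)
  have hp : (0 : ℝ) < p := by simpa [p] using h0
  have hpq : 2 * p ≤ q := by
    simp only [p, q]; exact_mod_cast hab
  have hq1 : 1 ≤ q := by
    simp only [q]; exact_mod_cast (by omega : 1 ≤ Fintype.card β)
  have he0 : 0 ≤ p / (q - p) := div_nonneg hp.le (by linarith)
  have he1 : p / (q - p) ≤ 1 := by
    rw [div_le_one (by linarith)]; linarith
  have hbase : |c * q * A| ≤ (|c| + 1) * q * A := by
    rw [abs_mul, abs_mul, abs_of_nonneg (by linarith : 0 ≤ q), abs_of_nonneg (by linarith : 0 ≤ A)]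
    gcongr; linarith
  have hge : 1 ≤ (|c| + 1) * q * A := by
    have h1 : 1 ≤ |c| + 1 := by linarith [abs_nonneg c]
    exact one_le_mul_of_one_le_of_one_le (one_le_mul_of_one_le_of_one_le h1 hq1) hA
  have h2 : |(c * q * A) ^ (p / (q - p))| ≤ (|c| + 1) * q * A := by
    refine (Real.abs_rpow_le_abs_rpow _ _).trans ?_
    refine (Real.rpow_le_rpow (abs_nonneg _) hbase he0).trans ?_
    calc _ ≤ ((|c| + 1) * q * A) ^ (1 : ℝ) := Real.rpow_le_rpow_of_exponent_le hge he1
      _ = _ := Real.rpow_one _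
  calc _ ≤ |c * (c * q * A) ^ (p / (q - p))| := le_abs_self _
    _ = |c| * |(c * q * A) ^ (p / (q - p))| := abs_mul _ _
    _ ≤ (|c| + 1) * ((|c| + 1) * q * A) := by gcongr; linarith
    _ = _ := by ring

open NumberField in
structure OkbData (K : Type) [Field K] [NumberField K] (I J : Type) [Fintype I] [Fintype J] where
  ι : K →+* ℂ
  b : J → 𝓞 K
  hb : LinearIndependent ℤ b
  x : I → 𝓞 K →+* 𝓞 K
  hx : ∀ g, Function.Injective (x g)
  Λ : 𝓞 K →+ ℂ
  m1 : J → I → ℂ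
  hm1 : ∀ j y, Λ (y * b j) = ∑ g, m1 j g * ι (x g y)
  m2 : I → J → ℂ
  hm2 : ∀ g y, ι (x g y) = ∑ j, m2 g j * Λ (y * b j)
  θ : J → J → 𝓞 K
  δ : ℕ
  hδ : 0 < δ
  hθ : ∀ j k, ι (θ j k) = δ * Complex.exp (Λ (b j * b k))

namespace OkbData
open NumberField
variable {K : Type} [Field K] [NumberField K] {I J : Type} [Fintype I] [Fintype J]
  (D : OkbData K I J)

def el (a : J → ℕ) : 𝓞 K := ∑ j, (a j : 𝓞 K) * D.b j

def e (L S : ℕ) (a s : J → ℕ) : 𝓞 K :=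
  ∏ j, ∏ k, (D.θ j k ^ (a j * s k) * (D.δ : 𝓞 K) ^ (L * S - a j * s k))

lemma el_inj : Function.Injective D.el := by
  intro a a' h
  have h1 : ∑ j, ((a j : ℤ) - (a' j : ℤ)) • D.b j = 0 := by
    have : ∑ j, ((a j : ℤ) - (a' j : ℤ)) • D.b j = D.el a - D.el a' := by
      simp only [el, ← Finset.sum_sub_distrib]
      refine Finset.sum_congr rfl fun j _ => ?_
      simp [sub_smul]
    rw [this, h, sub_self]
  have h2 := Fintype.linearIndependent_iff.1 D.hb _ h1
  funext j
  have := h2 j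
  omega

lemma Λ_el_mul (a : J → ℕ) (y : 𝓞 K) : D.Λ (D.el a * y) = ∑ j, (a j : ℂ) * D.Λ (D.b j * y) := by
  simp only [el, Finset.sum_mul, map_sum, mul_assoc]
  refine Finset.sum_congr rfl fun j _ => ?_
  rw [← nsmul_eq_mul, map_nsmul, nsmul_eq_mul]

lemma Λ_el_el (a s : J → ℕ) :
    D.Λ (D.el a * D.el s) = ∑ j, ∑ k, ((a j * s k : ℕ) : ℂ) * D.Λ (D.b j * D.b k) := by
  rw [Λ_el_mul]
  refine Finset.sum_congr rfl fun j _ => ?_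
  rw [mul_comm (D.b j), Λ_el_mul, Finset.mul_sum]
  refine Finset.sum_congr rfl fun k _ => ?_
  rw [mul_comm (D.b k)]; push_cast; ring

lemma ι_e {L S : ℕ} {a s : J → ℕ} (ha : ∀ j, a j < L) (hs : ∀ j, s j < S) :
    D.ι (D.e L S a s) = (D.δ : ℂ) ^ (Fintype.card J * Fintype.card J * (L * S)) *
      Complex.exp (D.Λ (D.el a * D.el s)) := by
  rw [Λ_el_el, Complex.exp_sum]
  simp_rw [Complex.exp_sum, e]
  push_cast
  simp only [map_prod, map_mul, map_pow, D.hθ, map_natCast, mul_pow]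
  have : ∀ j k, (D.δ : ℂ) ^ (a j * s k) * Complex.exp (D.Λ (D.b j * D.b k)) ^ (a j * s k) *
      (D.δ : ℂ) ^ (L * S - a j * s k) = (D.δ : ℂ) ^ (L * S) *
        Complex.exp (((a j : ℂ) * (s k : ℂ)) * D.Λ (D.b j * D.b k)) := by
    intro j k
    have h1 : a j * s k ≤ L * S := Nat.mul_le_mul (ha j).le (hs k).le
    have h2 : (D.δ : ℂ) ^ (L * S) = D.δ ^ (a j * s k) * D.δ ^ (L * S - a j * s k) := by
      rw [← pow_add]; congr 1; omega
    rw [h2, ← Complex.exp_nat_mul]; push_cast; ring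
  simp_rw [this, Finset.prod_mul_distrib, Finset.prod_const, Finset.card_univ]
  rw [← pow_mul, ← pow_mul]
  congr 2; ring


lemma bd1 : ∃ B : ℝ, 1 ≤ B ∧
    (∀ (φ : K →+* ℂ) g (L : ℕ) a, (∀ j, a j < L) → ‖φ (D.x g (D.el a))‖ ≤ B * L) := by
  classical
  have h0 : ∀ φg : (K →+* ℂ) × I, 0 ≤ ∑ j, ‖φg.1 (D.x φg.2 (D.b j))‖ :=
    fun _ => Finset.sum_nonneg fun _ _ => norm_nonneg _
  refine ⟨1 + ∑ φg : (K →+* ℂ) × I, ∑ j, ‖φg.1 (D.x φg.2 (D.b j))‖, ?_, ?_⟩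
  · have := Finset.sum_nonneg fun (φg : (K →+* ℂ) × I) (_ : φg ∈ Finset.univ) => h0 φg
    linarith
  · intro φ g L a ha
    have h1 := Finset.single_le_sum (fun φg _ => h0 φg) (Finset.mem_univ (φ, g))
    calc ‖φ (D.x g (D.el a))‖ = ‖∑ j, (a j : ℂ) * φ (D.x g (D.b j))‖ := by simp [el]
      _ ≤ ∑ j, ‖φ (D.x g (D.b j))‖ * L := by
        apply norm_sum_le_of_le
        intro j _
        rw [norm_mul, mul_comm]
        gcongr
        simpa using (ha j).le
      _ ≤ _ := by rw [← Finset.sum_mul]; gcongr; dsimp only at h1; linarith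

lemma bd2 : ∃ B : ℝ, 1 ≤ B ∧
    (∀ (L : ℕ) a i, (∀ j, a j < L) → ‖D.Λ (D.el a * D.b i)‖ ≤ B * L) ∧
    (∀ (L S : ℕ) a s, (∀ j, a j < L) → (∀ j, s j < S) →
      ‖D.Λ (D.el a * D.el s)‖ ≤ B * (L * S)) := by
  classical
  set B2 : ℝ := ∑ j, ∑ i, ‖D.Λ (D.b j * D.b i)‖ with hB2
  have p2 : 0 ≤ B2 := Finset.sum_nonneg fun _ _ => Finset.sum_nonneg fun _ _ => norm_nonneg _
  refine ⟨1 + B2, by linarith, ?_, ?_⟩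
  · intro L a i ha
    have h1 : ∑ j, ‖D.Λ (D.b j * D.b i)‖ ≤ B2 := by
      apply Finset.sum_le_sum
      intro j _
      exact Finset.single_le_sum (f := fun i => ‖D.Λ (D.b j * D.b i)‖)
        (fun _ _ => norm_nonneg _) (Finset.mem_univ i)
    rw [Λ_el_mul]
    calc _ ≤ ∑ j, ‖D.Λ (D.b j * D.b i)‖ * L := by
          apply norm_sum_le_of_le
          intro j _
          rw [norm_mul, mul_comm]
          gcongr
          simpa using (ha j).le
      _ ≤ _ := by rw [← Finset.sum_mul]; gcongr; linarith
  · intro L S a s ha hs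
    rw [Λ_el_el]
    calc _ ≤ ∑ j, ∑ i, ‖D.Λ (D.b j * D.b i)‖ * (L * S) := by
          apply norm_sum_le_of_le
          intro j _
          apply norm_sum_le_of_le
          intro k _
          rw [norm_mul, mul_comm]
          gcongr
          simp only [Complex.norm_natCast]
          exact_mod_cast Nat.mul_le_mul (ha j).le (hs k).le
      _ ≤ _ := by simp_rw [← Finset.sum_mul]; gcongr; linarith

lemma bd3 : ∃ B : ℝ, 1 ≤ B ∧
    (∀ (φ : K →+* ℂ) (L S : ℕ) a s, (∀ j, a j < L) → (∀ j, s j < S) →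
      ‖φ (D.e L S a s)‖ ≤ B ^ (L * S)) ∧
    (∀ L S : ℕ, (D.δ : ℝ) ^ (Fintype.card J * Fintype.card J * (L * S)) ≤ B ^ (L * S)) := by
  classical
  have hs0 : ∀ t : (K →+* ℂ) × J × J, 0 ≤ ‖t.1 (D.θ t.2.1 t.2.2)‖ := fun _ => norm_nonneg _
  have hs := Finset.sum_nonneg fun (t : (K →+* ℂ) × J × J) (_ : t ∈ Finset.univ) => hs0 t
  have hδp : (0 : ℝ) ≤ D.δ := Nat.cast_nonneg _
  set B0 : ℝ := 1 + D.δ + ∑ t : (K →+* ℂ) × J × J, ‖t.1 (D.θ t.2.1 t.2.2)‖ with hB0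
  have p0 : 1 ≤ B0 := by linarith
  have p3 : 1 ≤ B0 ^ (Fintype.card J * Fintype.card J) := one_le_pow₀ p0
  have hδ0 : (D.δ : ℝ) ≤ B0 := by linarith
  refine ⟨B0 ^ (Fintype.card J * Fintype.card J), p3, ?_, ?_⟩
  · intro φ L S a s ha hs
    have hθ0 : ∀ j k, ‖φ (D.θ j k)‖ ≤ B0 := by
      intro j k
      have h1 := Finset.single_le_sum (fun t _ => hs0 t) (Finset.mem_univ (φ, j, k))
      dsimp only at h1
      linarith
    have : ‖φ (D.e L S a s)‖ ≤ ∏ j : J, ∏ k : J, B0 ^ (L * S) := by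
      simp only [e]
      push_cast
      simp only [map_prod, map_mul, map_pow, map_natCast, norm_prod]
      apply Finset.prod_le_prod
      · intro _ _; exact Finset.prod_nonneg fun _ _ => norm_nonneg _
      intro j _
      apply Finset.prod_le_prod
      · intro _ _; exact norm_nonneg _
      intro k _
      have h1 : a j * s k ≤ L * S := Nat.mul_le_mul (ha j).le (hs k).le
      have h2 : B0 ^ (L * S) = B0 ^ (a j * s k) * B0 ^ (L * S - a j * s k) := by
        rw [← pow_add]; congr 1; omega
      rw [h2, norm_mul, norm_pow, norm_pow]
      gcongr
      · exact hθ0 j k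
      · simpa using hδ0
    refine this.trans (le_of_eq ?_)
    rw [Finset.prod_const, Finset.prod_const, Finset.card_univ, ← pow_mul, ← pow_mul,
      ← pow_mul]
    congr 1; ring
  · intro L S
    rw [pow_mul]
    gcongr

/-- all constants -/
lemma bounds : ∃ B : ℝ, 1 ≤ B ∧
    (∀ (φ : K →+* ℂ) g (L : ℕ) a, (∀ j, a j < L) → ‖φ (D.x g (D.el a))‖ ≤ B * L) ∧
    (∀ (L : ℕ) a i, (∀ j, a j < L) → ‖D.Λ (D.el a * D.b i)‖ ≤ B * L) ∧
    (∀ (L S : ℕ) a s, (∀ j, a j < L) → (∀ j, s j < S) →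
      ‖D.Λ (D.el a * D.el s)‖ ≤ B * (L * S)) ∧
    (∀ (φ : K →+* ℂ) (L S : ℕ) a s, (∀ j, a j < L) → (∀ j, s j < S) →
      ‖φ (D.e L S a s)‖ ≤ B ^ (L * S)) ∧
    (∀ L S : ℕ, (D.δ : ℝ) ^ (Fintype.card J * Fintype.card J * (L * S)) ≤ B ^ (L * S)) ∧
    (∀ g, ∑ j, ‖D.m2 g j‖ ≤ B) := by
  classical
  obtain ⟨B1, p1, h1⟩ := D.bd1
  obtain ⟨B2, p2, h2, h2'⟩ := D.bd2
  obtain ⟨B3, p3, h3, h3'⟩ := D.bd3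
  have hs0 : ∀ g, 0 ≤ ∑ j, ‖D.m2 g j‖ := fun _ => Finset.sum_nonneg fun _ _ => norm_nonneg _
  have p4 := Finset.sum_nonneg fun g (_ : g ∈ Finset.univ) => hs0 g
  refine ⟨B1 + B2 + B3 + ∑ g, ∑ j, ‖D.m2 g j‖, by linarith, ?_, ?_, ?_, ?_, ?_, ?_⟩
  · intro φ g L a ha
    exact (h1 φ g L a ha).trans (by gcongr; linarith)
  · intro L a i ha
    exact (h2 L a i ha).trans (by gcongr; linarith)
  · intro L S a s ha hs
    exact (h2' L S a s ha hs).trans (by gcongr; linarith)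
  · intro φ L S a s ha hs
    exact (h3 φ L S a s ha hs).trans (by gcongr; linarith)
  · intro L S
    exact (h3' L S).trans (by gcongr; linarith)
  · intro g
    have := Finset.single_le_sum (fun g _ => hs0 g) (Finset.mem_univ g)
    linarith

end OkbData

lemma okb_vandermonde {R β : Type*} [CommRing R] [IsDomain R] [Fintype β] (y v : β → R)
    (hy : Function.Injective y) (h : ∀ n : ℕ, ∑ a, v a * y a ^ n = 0) : v = 0 := by
  classical
  let eqv := Fintype.equivFin β
  have h1 : (v ∘ eqv.symm) = 0 := by
    apply Matrix.eq_zero_of_forall_pow_sum_mul_pow_eq_zero (f := y ∘ eqv.symm)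
      (hy.comp eqv.symm.injective)
    intro i
    rw [← h i]
    exact Equiv.sum_comp eqv.symm (fun a => v a * y a ^ (i : ℕ))
  funext a
  have := congrFun h1 (eqv a)
  simpa using this

open NumberField in
lemma okb_norm {K : Type} [Field K] [NumberField K] (x : 𝓞 K) (hx : x ≠ 0) (H : ℝ)
    (hH : ∀ φ : K →+* ℂ, ‖φ x‖ ≤ H) (ι : K →+* ℂ) :
    1 ≤ ‖ι x‖ * H ^ (Module.finrank ℚ K - 1) := by
  have hH0 : 0 ≤ H := (norm_nonneg _).trans (hH ι)
  have h1 := norm_norm_le_norm_mul_house_pow (x : K) ι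
  have h2 : house (x : K) ≤ H := okb_house_le hH0 hH
  have h3 : 1 ≤ ‖Algebra.norm ℚ (x : K)‖ := by
    rw [← Rat.norm_cast_real]
    have h4 : Algebra.norm ℚ (x : K) ≠ 0 :=
      Algebra.norm_ne_zero_iff.2 (by simpa using hx)
    obtain ⟨z, hz⟩ := (IsIntegrallyClosed.isIntegral_iff (R := ℤ) (K := ℚ)).1
      (Algebra.isIntegral_norm ℚ (RingOfIntegers.isIntegral_coe x))
    rw [← hz] at h4 ⊢
    have hz0 : z ≠ 0 := by
      rintro rfl
      simp at h4
    simp only [eq_intCast, Rat.cast_intCast, Real.norm_eq_abs]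
    exact_mod_cast Int.one_le_abs hz0
  calc (1:ℝ) ≤ _ := h3
    _ ≤ _ := h1
    _ ≤ _ := by gcongr; exact house_nonneg _

namespace OkbData
open NumberField
variable {K : Type} [Field K] [NumberField K] {I J : Type} [Fintype I] [Fintype J]
  [DecidableEq J]
  (D : OkbData K I J)

def F (L S : ℕ) (p : (J → Fin L) → 𝓞 K) (l : List I) (s : J → Fin S) : 𝓞 K :=
  ∑ a : J → Fin L, p a * ((l.map (fun g => D.x g (D.el (fun j => a j)))).prod *
    D.e L S (fun j => a j) (fun j => s j))

lemma δ_ne : (D.δ : 𝓞 K) ≠ 0 := by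
  exact_mod_cast D.hδ.ne'

lemma e_zero (L S : ℕ) (a : J → ℕ) : D.e L S a (fun _ => 0) =
    (D.δ : 𝓞 K) ^ (Fintype.card J * Fintype.card J * (L * S)) := by
  simp only [e, mul_zero, pow_zero, one_mul, Nat.sub_zero, Finset.prod_const, Finset.card_univ]
  rw [← pow_mul, ← pow_mul]; congr 1; ring

lemma exists_siegel (B : ℝ) (hB1 : 1 ≤ B)
    (h1 : ∀ (φ : K →+* ℂ) g (L : ℕ) a, (∀ j, a j < L) → ‖φ (D.x g (D.el a))‖ ≤ B * L)
    (h3 : ∀ (φ : K →+* ℂ) (L S : ℕ) a s, (∀ j, a j < L) → (∀ j, s j < S) →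
      ‖φ (D.e L S a s)‖ ≤ B ^ (L * S)) :
    ∃ C : ℝ, 1 ≤ C ∧ ∀ (L S T : ℕ), 0 < L → 0 < S → 0 < T →
      2 * (T ^ Fintype.card I * S ^ Fintype.card J) ≤ L ^ Fintype.card J →
      ∃ p : (J → Fin L) → 𝓞 K, p ≠ 0 ∧
        (∀ a (φ : K →+* ℂ), ‖φ (p a)‖ ≤ C * ((L : ℝ) ^ Fintype.card J *
          ((B * L) ^ (T * Fintype.card I) * B ^ (L * S)))) ∧
        ∀ l : List I, l.length < T → ∀ s, D.F L S p l s = 0 := by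
  classical
  obtain ⟨C, hC1, hC⟩ := okb_siegel K
  refine ⟨C, hC1, fun L S T hL hS hT hcard => ?_⟩
  have hL1 : (1 : ℝ) ≤ L := by exact_mod_cast hL
  have hBL : 1 ≤ B * L := one_le_mul_of_one_le_of_one_le hB1 hL1
  let M : Matrix ((I → Fin T) × (J → Fin S)) (J → Fin L) (𝓞 K) := Matrix.of fun k a =>
    (∏ g, D.x g (D.el (fun j => a j)) ^ (k.1 g : ℕ)) *
      D.e L S (fun j => a j) (fun j => k.2 j)
  have hh0 : M ≠ 0 := by
    intro h
    have := congrFun (congrFun h (fun _ => ⟨0, hT⟩, fun _ => ⟨0, hS⟩)) (fun _ => ⟨0, hL⟩)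
    simp only [M, Matrix.of_apply, pow_zero, Finset.prod_const_one, one_mul, e_zero,
      Matrix.zero_apply] at this
    exact pow_ne_zero _ D.δ_ne this
  have hh1 : 0 < Fintype.card ((I → Fin T) × (J → Fin S)) := by
    have : 0 < T ^ Fintype.card I * S ^ Fintype.card J := by positivity
    simpa using this
  have hh2 : 2 * Fintype.card ((I → Fin T) × (J → Fin S)) ≤ Fintype.card (J → Fin L) := by
    simpa using hcard
  have hh3 : 1 ≤ (B * L) ^ (T * Fintype.card I) * B ^ (L * S) := by
    exact one_le_mul_of_one_le_of_one_le (one_le_pow₀ hBL) (one_le_pow₀ hB1)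
  have hh4 : ∀ k a, ∀ φ : K →+* ℂ, ‖φ (M k a)‖ ≤ (B * L) ^ (T * Fintype.card I) * B ^ (L * S) := by
    intro k a φ
    simp only [M, Matrix.of_apply]
    push_cast
    rw [map_mul, norm_mul]
    gcongr
    · rw [map_prod, norm_prod, pow_mul, ← Finset.card_univ, ← Finset.prod_const]
      apply Finset.prod_le_prod
      · intro _ _; exact norm_nonneg _
      · intro g _
        rw [map_pow, norm_pow]
        calc _ ≤ (B * L) ^ (k.1 g : ℕ) := by
              gcongr; exact h1 φ g L _ (fun j => (a j).2)
          _ ≤ _ := pow_le_pow_right₀ hBL (k.1 g).2.le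
    · exact h3 φ L S _ _ (fun j => (a j).2) (fun j => (k.2 j).2)
  obtain ⟨p, hp0, hp, hpb⟩ := hC _ _ M hh0 hh1 hh2 _ hh3 hh4
  refine ⟨p, hp0, ?_, ?_⟩
  · intro a φ
    simpa using hpb a φ
  · intro l hl s
    let τ : I → Fin T := fun g => ⟨l.count g, lt_of_le_of_lt (List.count_le_length) hl⟩
    have := congrFun hp (τ, s)
    simp only [Matrix.mulVec, dotProduct, Pi.zero_apply, M, Matrix.of_apply] at this
    rw [F, ← this]
    refine Finset.sum_congr rfl fun a _ => ?_
    rw [mul_comm (p a)]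
    congr 2
    rw [Finset.prod_list_map_count]
    refine Finset.prod_subset (Finset.subset_univ _) ?_
    intro g _ hg
    have : l.count g = 0 := List.count_eq_zero.2 (by simpa using hg)
    simp [this]

lemma exists_min [Nonempty I] (L S T : ℕ) (hS : 0 < S) (p : (J → Fin L) → 𝓞 K) (hp : p ≠ 0)
    (hT : ∀ l : List I, l.length < T → ∀ s, D.F L S p l s = 0) :
    ∃ n, T ≤ n ∧ (∀ l : List I, l.length < n → ∀ s, D.F L S p l s = 0) ∧
      ∃ l : List I, l.length = n ∧ ∃ s, D.F L S p l s ≠ 0 := by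
  classical
  have hex : ∃ n, ∃ l : List I, l.length = n ∧ ∃ s, D.F L S p l s ≠ 0 := by
    by_contra! h
    apply hp
    obtain ⟨g⟩ := (inferInstance : Nonempty I)
    refine okb_vandermonde (fun a : J → Fin L => D.x g (D.el (fun j => a j))) p ?_ ?_
    · intro a a' haa
      have := D.el_inj (D.hx g haa)
      funext j
      exact Fin.ext (congrFun this j)
    · intro n
      have h1 := h n (List.replicate n g) (by simp) (fun _ => ⟨0, hS⟩)
      simp only [F, e_zero, List.map_replicate, List.prod_replicate] at h1
      simp_rw [← mul_assoc] at h1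
      rw [← Finset.sum_mul] at h1
      exact (mul_eq_zero.1 h1).resolve_right (pow_ne_zero _ D.δ_ne)
  refine ⟨Nat.find hex, ?_, ?_, Nat.find_spec hex⟩
  · by_contra! h
    obtain ⟨l, hl, s, hs⟩ := Nat.find_spec hex
    exact hs (hT l (by omega) s)
  · intro l hl s
    by_contra h
    exact Nat.find_min hex hl ⟨l, rfl, s, h⟩

end OkbData

namespace OkbData
open NumberField
variable {K : Type} [Field K] [NumberField K] {I J : Type} [Fintype I] [Fintype J]
  [DecidableEq J] (D : OkbData K I J)

lemma ι_F (L S : ℕ) (p : (J → Fin L) → 𝓞 K) (l : List I) (s : J → Fin S) :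
    D.ι (D.F L S p l s) = (D.δ : ℂ) ^ (Fintype.card J * Fintype.card J * (L * S)) *
      ∑ a : J → Fin L, (D.ι (p a) * Complex.exp (D.Λ (D.el (fun j => a j) * D.el (fun j => s j)))) *
        (l.map (fun g => D.ι (D.x g (D.el (fun j => a j))))).prod := by
  simp only [F]
  push_cast
  rw [map_sum, Finset.mul_sum]
  refine Finset.sum_congr rfl fun a _ => ?_
  have h1 : D.ι (algebraMap (𝓞 K) K (l.map (fun g => D.x g (D.el (fun j => a j)))).prod) =
      (l.map (fun g => D.ι (D.x g (D.el (fun j => a j))))).prod := by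
    rw [map_list_prod, map_list_prod, List.map_map, List.map_map]; rfl
  rw [map_mul, map_mul, h1, D.ι_e (fun j => (a j).2) (fun j => (s j).2)]
  ring

lemma el_update (s : J → ℕ) (i : J) (t : ℕ) (y : 𝓞 K) :
    D.Λ (y * D.el (Function.update s i t)) = D.Λ (y * D.el s) + ((t : ℂ) - s i) * D.Λ (y * D.b i) := by
  rw [mul_comm, mul_comm y (D.el s), Λ_el_mul, Λ_el_mul, ← Finset.add_sum_erase _ _ (mem_univ i),
    ← Finset.add_sum_erase univ (fun j => (s j : ℂ) * D.Λ (D.b j * y)) (mem_univ i)]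
  have : ∑ x ∈ univ.erase i, ((Function.update s i t x : ℕ) : ℂ) * D.Λ (D.b x * y) =
      ∑ x ∈ univ.erase i, (s x : ℂ) * D.Λ (D.b x * y) := by
    refine Finset.sum_congr rfl fun x hx => ?_
    rw [Function.update_of_ne (Finset.ne_of_mem_erase hx)]
  rw [this, Function.update_self, mul_comm y]
  ring

lemma ybound [Nonempty J] (B : ℝ) (hB1 : 1 ≤ B)
    (h2 : ∀ (L : ℕ) a i, (∀ j, a j < L) → ‖D.Λ (D.el a * D.b i)‖ ≤ B * L)
    (h2' : ∀ (L S : ℕ) a s, (∀ j, a j < L) → (∀ j, s j < S) →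
      ‖D.Λ (D.el a * D.el s)‖ ≤ B * (L * S))
    (L S n N0 : ℕ) (hL : 0 < L) (hS : 0 < S) (hN0 : ∀ N, n ≤ Fintype.card J * N → N0 ≤ N)
    (p : (J → Fin L) → 𝓞 K) (P : ℝ) (hP0 : 0 ≤ P) (hP : ∀ a, ‖D.ι (p a)‖ ≤ P)
    (hvan : ∀ l : List I, l.length < n → ∀ s, D.F L S p l s = 0)
    (R : ℝ) (hR : 2 * ((S : ℝ) + 1) ≤ R) (s : J → Fin S) (l : List J) (hl : l.length = n) :
    ‖∑ a : J → Fin L, (D.ι (p a) *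
        Complex.exp (D.Λ (D.el (fun j => a j) * D.el (fun j => s j)))) *
        (l.map (fun i => D.Λ (D.el (fun j => a j) * D.b i))).prod‖ ≤
      n.factorial * (((L : ℝ) ^ Fintype.card J *
        (P * Real.exp (B * (L * S)) * (B * L) ^ n * Real.exp (R * (B * L)))) *
          (2 * (S + 1) / R) ^ (N0 * S)) := by
  obtain ⟨i, hi⟩ := okb_pigeon l
  rw [hl] at hi
  set N := l.count i with hN
  set l0 := l.filter (fun k => k ≠ i) with hl0
  have hlen : l.length = N + l0.length := okb_list_len l i
  set Y : J → (J → Fin L) → ℂ := fun i a => D.Λ (D.el (fun j => (a j : ℕ)) * D.b i) with hY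
  set W : (J → Fin L) → ℂ := fun a => D.ι (p a) *
        Complex.exp (D.Λ (D.el (fun j => a j) * D.el (fun j => s j))) with hW
  set f : ℂ → ℂ := fun z => ∑ a, (W a * (l0.map (fun j => Y j a)).prod) * Complex.exp (z * Y i a)
    with hf
  set A : Finset ℂ := (Finset.range S).image (fun t : ℕ => (t : ℂ) - ((s i : ℕ) : ℂ)) with hA
  have hAc : A.card = S := by
    rw [hA, Finset.card_image_of_injective, Finset.card_range]
    intro x y hxy
    simpa using hxy
  have hLr : (1 : ℝ) ≤ L := by exact_mod_cast hL
  have hSr : (1 : ℝ) ≤ S := by exact_mod_cast hS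
  have hBL : 1 ≤ B * L := one_le_mul_of_one_le_of_one_le hB1 hLr
  have hYb : ∀ i a, ‖Y i a‖ ≤ B * L := fun i a => h2 L _ i (fun j => (a j).2)
  have hprod : ∀ (l : List J) a, ‖(l.map (fun j => Y j a)).prod‖ ≤ (B * L) ^ l.length := by
    intro l a
    induction l with
    | nil => simp
    | cons j l ih =>
      rw [List.map_cons, List.prod_cons, norm_mul, List.length_cons, pow_succ']
      gcongr
      exact hYb j a
  have hWb : ∀ a, ‖W a‖ ≤ P * Real.exp (B * (L * S)) := by
    intro a
    rw [hW, norm_mul, Complex.norm_exp]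
    gcongr
    · exact hP a
    · exact (Complex.re_le_norm _).trans (h2' L S _ _ (fun j => (a j).2) (fun j => (s j).2))
  have key := okb_schwarz (N := N) f (by simp only [hf]; fun_prop) A ?_ S R
    ((L : ℝ) ^ Fintype.card J *
        (P * Real.exp (B * (L * S)) * (B * L) ^ n * Real.exp (R * (B * L)))) hSr ?_ (by linarith) ?_
  · rw [hf, okb_iter] at key
    have e1 : ∑ a, W a * (l.map (fun j => Y j a)).prod =
        ∑ a, (W a * (l0.map (fun j => Y j a)).prod) * Y i a ^ N * Complex.exp (0 * Y i a) := by
      refine Finset.sum_congr rfl fun a _ => ?_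
      rw [okb_list_prod l (fun j => Y j a) i]
      simp only [zero_mul, Complex.exp_zero]
      ring
    show ‖∑ a, W a * (l.map (fun j => Y j a)).prod‖ ≤ _
    rw [e1]
    refine key.trans ?_
    rw [hAc]
    have hR0 : 0 < R := by linarith
    have hr1 : 2 * ((S : ℝ) + 1) / R ≤ 1 := by rw [div_le_one hR0]; exact hR
    have hr0 : 0 ≤ 2 * ((S : ℝ) + 1) / R := by positivity
    have hNn : N ≤ n := by omega
    have hpw : (2 * ((S : ℝ) + 1) / R) ^ (N * S) ≤ (2 * ((S : ℝ) + 1) / R) ^ (N0 * S) :=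
      pow_le_pow_of_le_one hr0 hr1 (Nat.mul_le_mul (hN0 N hi) le_rfl)
    gcongr
  · intro t ht m hm
    obtain ⟨t', ht', rfl⟩ := Finset.mem_image.1 ht
    rw [Finset.mem_range] at ht'
    set s' : J → Fin S := Function.update s i ⟨t', ht'⟩ with hs'
    have hs'' : (fun j => ((s' j : Fin S) : ℕ)) = Function.update (fun j => (s j : ℕ)) i t' := by
      funext j
      by_cases hj : j = i
      · subst hj; simp [hs']
      · simp [hs', Function.update_of_ne hj]
    have hz := okb_change_zero (fun g (a : J → Fin L) => D.ι (D.x g (D.el (fun j => a j)))) Y D.m1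
      (fun j a => D.hm1 j _) (fun a => D.ι (p a) *
        Complex.exp (D.Λ (D.el (fun j => a j) * D.el (fun j => s' j)))) n (by
        intro l1 hl1
        have := D.ι_F L S p l1 s'
        rw [hvan l1 hl1 s'] at this
        simp only [map_zero] at this
        exact (mul_eq_zero.1 this.symm).resolve_left
          (pow_ne_zero _ (by exact_mod_cast D.hδ.ne'))) (List.replicate m i ++ l0) [] (by
        simp; omega)
    rw [hf, okb_iter]
    rw [← hz]
    refine Finset.sum_congr rfl fun a _ => ?_
    rw [hs'', el_update, Complex.exp_add]
    simp only [List.map_nil, List.prod_nil, one_mul, List.map_append, List.map_replicate,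
      List.prod_append, List.prod_replicate, hW, hY]
    ring
  · intro t ht
    obtain ⟨t', ht', rfl⟩ := Finset.mem_image.1 ht
    rw [Finset.mem_range] at ht'
    have h3 := (s i).2
    have : ((t' : ℂ) - ((s i : ℕ) : ℂ)) = (((t' : ℝ) - ((s i : ℕ) : ℝ) : ℝ) : ℂ) := by push_cast; rfl
    rw [this, Complex.norm_real, Real.norm_eq_abs, abs_le]
    have h4 : (t' : ℝ) ≤ S := by exact_mod_cast ht'.le
    have h5 : ((s i : ℕ) : ℝ) ≤ S := by exact_mod_cast h3.le
    have h6 : (0:ℝ) ≤ t' := by positivity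
    have h7 : (0:ℝ) ≤ ((s i : ℕ) : ℝ) := by positivity
    constructor <;> linarith
  · intro z hz
    rw [hf]
    have : (L : ℝ) ^ Fintype.card J *
        (P * Real.exp (B * (L * S)) * (B * L) ^ n * Real.exp (R * (B * L))) =
        ∑ a : J → Fin L, (P * Real.exp (B * (L * S)) * (B * L) ^ n * Real.exp (R * (B * L))) := by
      simp
    rw [this]
    apply norm_sum_le_of_le
    intro a _
    rw [norm_mul, norm_mul, Complex.norm_exp]
    have hR0 : 0 ≤ R := by linarith
    gcongr
    · exact hWb a
    · exact (hprod l0 a).trans (pow_le_pow_right₀ hBL (by omega))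
    · refine (Complex.re_le_norm _).trans ?_
      rw [norm_mul]
      gcongr
      exact hYb i a

lemma step3 [Nonempty J] (B : ℝ) (hB1 : 1 ≤ B)
    (h1 : ∀ (φ : K →+* ℂ) g (L : ℕ) a, (∀ j, a j < L) → ‖φ (D.x g (D.el a))‖ ≤ B * L)
    (h2 : ∀ (L : ℕ) a i, (∀ j, a j < L) → ‖D.Λ (D.el a * D.b i)‖ ≤ B * L)
    (h2' : ∀ (L S : ℕ) a s, (∀ j, a j < L) → (∀ j, s j < S) →
      ‖D.Λ (D.el a * D.el s)‖ ≤ B * (L * S))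
    (h3 : ∀ (φ : K →+* ℂ) (L S : ℕ) a s, (∀ j, a j < L) → (∀ j, s j < S) →
      ‖φ (D.e L S a s)‖ ≤ B ^ (L * S))
    (h3' : ∀ L S : ℕ, (D.δ : ℝ) ^ (Fintype.card J * Fintype.card J * (L * S)) ≤ B ^ (L * S))
    (h4 : ∀ g, ∑ j, ‖D.m2 g j‖ ≤ B)
    (L S n N0 : ℕ) (hL : 0 < L) (hS : 0 < S) (hN0 : ∀ N, n ≤ Fintype.card J * N → N0 ≤ N)
    (p : (J → Fin L) → 𝓞 K) (P : ℝ) (hP0 : 0 ≤ P) (hP : ∀ a, ∀ φ : K →+* ℂ, ‖φ (p a)‖ ≤ P)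
    (hvan : ∀ l : List I, l.length < n → ∀ s, D.F L S p l s = 0)
    (hex : ∃ l : List I, l.length = n ∧ ∃ s, D.F L S p l s ≠ 0)
    (R : ℝ) (hR : 2 * ((S : ℝ) + 1) ≤ R) :
    1 ≤ (B ^ (L * S) * (B ^ n * (n.factorial * (((L : ℝ) ^ Fintype.card J *
        (P * Real.exp (B * (L * S)) * (B * L) ^ n * Real.exp (R * (B * L)))) *
          (2 * (S + 1) / R) ^ (N0 * S))))) * ((L : ℝ) ^ Fintype.card J *
            (P * ((B * L) ^ n * B ^ (L * S)))) ^ (Module.finrank ℚ K - 1) := by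
  obtain ⟨l, hl, s, hs⟩ := hex
  have hR0 : 0 < R := by
    have : (0:ℝ) ≤ S := by positivity
    linarith
  have hn := okb_norm _ hs ((L : ℝ) ^ Fintype.card J * (P * ((B * L) ^ n * B ^ (L * S)))) (by
    intro φ
    have : (L : ℝ) ^ Fintype.card J * (P * ((B * L) ^ n * B ^ (L * S))) =
        ∑ a : J → Fin L, P * ((B * L) ^ n * B ^ (L * S)) := by
      simp
    rw [this, F]
    push_cast
    rw [map_sum]
    apply norm_sum_le_of_le
    intro a _
    have h5 : ∀ l : List I, ‖φ (algebraMap (𝓞 K) K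
        (l.map (fun g => D.x g (D.el (fun j => a j)))).prod)‖ ≤ (B * L) ^ l.length := by
      intro l
      induction l with
      | nil => simp
      | cons g l ih =>
        rw [List.map_cons, List.prod_cons, map_mul, map_mul, norm_mul, List.length_cons, pow_succ']
        gcongr
        exact h1 φ g L _ (fun j => (a j).2)
    rw [map_mul, map_mul, norm_mul, norm_mul]
    gcongr
    · exact hP a φ
    · rw [← hl]; exact h5 l
    · exact h3 φ L S _ _ (fun j => (a j).2) (fun j => (s j).2)) D.ι
  refine hn.trans ?_
  gcongr
  rw [ι_F, norm_mul, norm_pow, Complex.norm_natCast]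
  have h6 := okb_change_bound (fun g (a : J → Fin L) => D.ι (D.x g (D.el (fun j => a j))))
    (fun i a => D.Λ (D.el (fun j => (a j : ℕ)) * D.b i)) D.m2 (fun g a => D.hm2 g _)
    (fun a => D.ι (p a) * Complex.exp (D.Λ (D.el (fun j => a j) * D.el (fun j => s j)))) n B _ h4
    (by positivity) (D.ybound B hB1 h2 h2' L S n N0 hL hS hN0 p P hP0 (fun a => hP a D.ι) hvan R hR s)
    l [] (by simpa using hl)
  simp only [List.map_nil, List.prod_nil, one_mul, hl] at h6
  gcongr
  exact h3' L S

end OkbData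

lemma okb_ceil (n d : ℕ) (hd : 0 < d) : ∃ N0, n ≤ d * N0 ∧ ∀ N, n ≤ d * N → N0 ≤ N := by
  have hex : ∃ N, n ≤ d * N := ⟨n, Nat.le_mul_of_pos_left n hd⟩
  classical
  exact ⟨Nat.find hex, Nat.find_spec hex, fun N h => Nat.find_min' hex h⟩

lemma okb_mp {x y a b : ℝ} {n : ℕ} (hx : x ≤ a ^ n) (hy : y ≤ b ^ n) (hx0 : 0 ≤ x) (hy0 : 0 ≤ y) :
    x * y ≤ (a * b) ^ n := by
  rw [mul_pow]
  exact mul_le_mul hx hy hy0 (hx0.trans hx)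

lemma okb_alg (B C b1 b2 b3 b4 b5 Q n : ℝ) (hn : 0 < n) (d k c : ℕ) (hd : 0 < d)
    (hc : c = 2 + d * (k + 1)) (p : ℝ) (hp : p = C * (b2 * ((b3 * n) ^ k * b1))) :
    ((b1 * (B * (n * ((b2 * (p * b4 * (b3 * n) * b5)) * (Q / n) ^ c)))) *
      (b2 * (p * ((b3 * n) * b1))) ^ (d - 1)) =
      ((b1 * (B * ((b2 * ((C * (b2 * (b3 ^ k * b1))) * b4 * b3 * b5)) * Q ^ c))) *
    (b2 * ((C * (b2 * (b3 ^ k * b1))) * (b3 * b1))) ^ (d - 1)) / n := by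
  have e2 : (b2 * (p * ((b3 * n) * b1))) =
     (b2 * ((C * (b2 * (b3 ^ k * b1))) * (b3 * b1))) * (n : ℝ) ^ (k + 1) := by
    rw [hp, mul_pow b3]; ring
  have e3 : (n : ℝ) ^ c = n * n ^ (k + 1) * ((n : ℝ) ^ (k + 1)) ^ (d - 1) * n := by
    rw [mul_assoc (n : ℝ), ← pow_succ', Nat.sub_add_cancel hd, ← pow_mul, hc]; ring
  rw [e2, mul_pow, div_pow, hp, mul_pow b3, e3]
  generalize (b2 * ((C * (b2 * (b3 ^ k * b1))) * (b3 * b1))) ^ (d - 1) = Z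
  have : (((n : ℝ) ^ (k + 1)) ^ (d - 1)) ≠ 0 := by positivity
  generalize (((n : ℝ) ^ (k + 1)) ^ (d - 1)) = V at *
  rw [pow_succ]
  field_simp

lemma okb_final (B C : ℝ) (hB : 1 ≤ B) (hC : 1 ≤ C) (d k : ℕ) (hd : 0 < d) :
    ∃ S : ℕ, 0 < S ∧ ∃ E : ℝ, ∀ X : ℕ, 2 * (S + 1) ≤ X → ∀ n N0 : ℕ, X ^ d ≤ n → n ≤ d * N0 →
      1 ≤ (B ^ ((2 * S * X ^ (d - 1)) * S) * (B ^ n * (n.factorial *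
        ((((2 * S * X ^ (d - 1) : ℕ) : ℝ) ^ d *
        ((C * (((2 * S * X ^ (d - 1) : ℕ) : ℝ) ^ d * ((B * (2 * S * X ^ (d - 1) : ℕ)) ^ (X ^ d * k) *
          B ^ (2 * S * X ^ (d - 1) * S)))) *
          Real.exp (B * ((2 * S * X ^ (d - 1) : ℕ) * S)) *
          (B * (2 * S * X ^ (d - 1) : ℕ)) ^ n *
          Real.exp ((n / (X : ℝ) ^ (d - 1)) * (B * (2 * S * X ^ (d - 1) : ℕ))))) *
          (2 * (S + 1) / (n / (X : ℝ) ^ (d - 1))) ^ (N0 * S))))) *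
        (((2 * S * X ^ (d - 1) : ℕ) : ℝ) ^ d *
            ((C * (((2 * S * X ^ (d - 1) : ℕ) : ℝ) ^ d *
            ((B * (2 * S * X ^ (d - 1) : ℕ)) ^ (X ^ d * k) *
          B ^ (2 * S * X ^ (d - 1) * S)))) *
            ((B * (2 * S * X ^ (d - 1) : ℕ)) ^ n * B ^ (2 * S * X ^ (d - 1) * S)))) ^ (d - 1) →
        (X : ℝ) ≤ E := by
  set c : ℕ := 2 + d * (k + 1) with hc
  refine ⟨d * d * c, by positivity, ?_⟩
  set S : ℕ := d * d * c with hS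
  have hS0 : 0 < S := by positivity
  set b1 : ℝ := B ^ (2 * S * S) with hb1
  set b2 : ℝ := (4 * S) ^ d with hb2
  set b3 : ℝ := B * (2 * S) with hb3
  set b4 : ℝ := Real.exp (B * (2 * S * S)) with hb4
  set b5 : ℝ := Real.exp (B * (2 * S)) with hb5
  set Q : ℝ := (2 * (S + 1)) ^ d with hQ
  refine ⟨(b1 * (B * ((b2 * ((C * (b2 * (b3 ^ k * b1))) * b4 * b3 * b5)) * Q ^ c))) *
    (b2 * ((C * (b2 * (b3 ^ k * b1))) * (b3 * b1))) ^ (d - 1), ?_⟩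
  intro X hX n N0 hn hN0 h
  set L : ℕ := 2 * S * X ^ (d - 1) with hL
  have hX0 : 0 < X := by omega
  have hX1 : (1 : ℝ) ≤ X := by exact_mod_cast hX0
  have hXn : X ^ (d - 1) ≤ n := (Nat.pow_le_pow_right hX0 (by omega)).trans hn
  have hXXn : X ≤ n := by
    refine le_trans ?_ hn
    exact Nat.le_self_pow hd.ne' X
  have hn0 : 0 < n := by omega
  have hnr : (0 : ℝ) < n := by exact_mod_cast hn0
  have hXp : (0 : ℝ) < (X : ℝ) ^ (d - 1) := by positivity
  have hXnr : (X : ℝ) ^ (d - 1) ≤ n := by exact_mod_cast hXn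
  have hLn : L ≤ 2 * S * n := Nat.mul_le_mul le_rfl hXn
  have hL0 : 0 < L := by positivity
  have hL1 : (1 : ℝ) ≤ L := by exact_mod_cast hL0
  have hLnr : (L : ℝ) ≤ 2 * S * n := by exact_mod_cast hLn
  have hBL1 : 1 ≤ B * L := one_le_mul_of_one_le_of_one_le hB hL1
  have hSr : (1 : ℝ) ≤ S := by exact_mod_cast hS0
  -- bounds
  have a1 : B ^ (L * S) ≤ b1 ^ n := by
    rw [hb1, ← pow_mul]
    apply pow_le_pow_right₀ hB
    calc L * S ≤ 2 * S * n * S := Nat.mul_le_mul hLn le_rfl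
      _ = _ := by ring
  have a2 : (L : ℝ) ^ d ≤ b2 ^ n := by
    rw [hb2, ← pow_mul, mul_comm d n, pow_mul]
    gcongr
    calc (L : ℝ) ≤ 2 * S * n := hLnr
      _ ≤ (2 * S) ^ n * 2 ^ n := by
        gcongr
        · exact le_self_pow₀ (by linarith) hn0.ne'
        · exact_mod_cast Nat.lt_two_pow_self.le
      _ = _ := by rw [← mul_pow]; congr 1; ring
  have a3 : B * L ≤ b3 * n := by
    rw [hb3, mul_assoc]; gcongr
  have a4 : Real.exp (B * (L * S)) ≤ b4 ^ n := by
    rw [hb4, ← Real.exp_nat_mul]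
    apply Real.exp_le_exp.2
    calc B * (L * S) ≤ B * (2 * S * n * S) := by gcongr
      _ = _ := by ring
  have a5 : Real.exp ((n / (X : ℝ) ^ (d - 1)) * (B * L)) ≤ b5 ^ n := by
    rw [hb5, ← Real.exp_nat_mul]
    apply Real.exp_le_exp.2
    apply le_of_eq
    rw [hL]; push_cast
    field_simp
  have a6 : C ≤ C ^ n := le_self_pow₀ hC hn0.ne'
  have a7 : (B * L) ^ (X ^ d * k) ≤ ((b3 * n) ^ k) ^ n := by
    calc (B * L) ^ (X ^ d * k) ≤ (B * L) ^ (n * k) :=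
          pow_le_pow_right₀ hBL1 (Nat.mul_le_mul hn le_rfl)
      _ ≤ (b3 * n) ^ (n * k) := by gcongr
      _ = _ := by rw [mul_comm n k, pow_mul]
  have a8 : (B * L) ^ n ≤ (b3 * n) ^ n := by gcongr
  have a9 : (n.factorial : ℝ) ≤ (n : ℝ) ^ n := by exact_mod_cast Nat.factorial_le_pow n
  have a10 : (2 * ((S : ℝ) + 1) / (n / (X : ℝ) ^ (d - 1))) ^ (N0 * S) ≤ ((Q / n) ^ c) ^ n := by
    have hR0 : (0 : ℝ) < n / (X : ℝ) ^ (d - 1) := by positivity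
    have hRX : (X : ℝ) ≤ n / (X : ℝ) ^ (d - 1) := by
      rw [le_div_iff₀ hXp, ← pow_succ']
      rw [Nat.sub_add_cancel hd]
      exact_mod_cast hn
    have hr0 : 0 ≤ 2 * ((S : ℝ) + 1) / (n / (X : ℝ) ^ (d - 1)) := by positivity
    have hr1 : 2 * ((S : ℝ) + 1) / (n / (X : ℝ) ^ (d - 1)) ≤ 1 := by
      rw [div_le_one hR0]
      refine le_trans ?_ hRX
      exact_mod_cast hX
    have hRd : (n : ℝ) ≤ (n / (X : ℝ) ^ (d - 1)) ^ d := by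
      rw [div_pow, le_div_iff₀ (by positivity), ← pow_mul, mul_comm (d - 1) d, pow_mul]
      calc (n : ℝ) * ((X : ℝ) ^ d) ^ (d - 1) ≤ n * n ^ (d - 1) := by
            gcongr; exact_mod_cast hn
        _ = _ := by rw [← pow_succ', Nat.sub_add_cancel hd]
    calc (2 * ((S : ℝ) + 1) / (n / (X : ℝ) ^ (d - 1))) ^ (N0 * S)
        ≤ (2 * ((S : ℝ) + 1) / (n / (X : ℝ) ^ (d - 1))) ^ (d * (c * n)) := by
          apply pow_le_pow_of_le_one hr0 hr1
          calc d * (c * n) ≤ d * (c * (d * N0)) := by gcongr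
            _ = N0 * S := by rw [hS]; ring
      _ = ((2 * ((S : ℝ) + 1) / (n / (X : ℝ) ^ (d - 1))) ^ d) ^ (c * n) := by rw [pow_mul]
      _ ≤ (Q / n) ^ (c * n) := by
          gcongr
          rw [div_pow]
          exact div_le_div_of_nonneg_left (by positivity) hnr hRd
      _ = _ := by rw [pow_mul]
  have hb1' : 0 ≤ b1 := by positivity
  have hb2' : 0 ≤ b2 := by positivity
  have hb3' : 0 ≤ b3 := by positivity
  have hb4' : 0 ≤ b4 := by positivity
  have hb5' : 0 ≤ b5 := by positivity
  have hQ' : 0 ≤ Q := by positivity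
  have hB0 : 0 ≤ B := by linarith
  have a11 : C * ((L : ℝ) ^ d * ((B * L) ^ (X ^ d * k) * B ^ (L * S))) ≤
      (C * (b2 * ((b3 * n) ^ k * b1))) ^ n :=
    okb_mp a6 (okb_mp a2 (okb_mp a7 a1 (by positivity) (by positivity)) (by positivity)
      (by positivity)) (by positivity) (by positivity)
  set p : ℝ := C * (b2 * ((b3 * n) ^ k * b1)) with hp
  set P : ℝ := C * ((L : ℝ) ^ d * ((B * L) ^ (X ^ d * k) * B ^ (L * S))) with hP
  have hp0 : 0 ≤ p := by positivity
  have hP0 : 0 ≤ P := by positivity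
  clear_value P
  have a12 : (L : ℝ) ^ d * (P * ((B * L) ^ n * B ^ (L * S))) ≤
      (b2 * (p * ((b3 * n) * b1))) ^ n :=
    okb_mp a2 (okb_mp a11 (okb_mp a8 a1 (by positivity) (by positivity)) (by positivity)
      (by positivity)) (by positivity) (by positivity)
  have a13 : ((L : ℝ) ^ d * (P * ((B * L) ^ n * B ^ (L * S)))) ^ (d - 1) ≤
      ((b2 * (p * ((b3 * n) * b1))) ^ (d - 1)) ^ n :=
    (pow_le_pow_left₀ (by positivity) a12 _).trans (le_of_eq (pow_right_comm _ _ _))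
  have a14 : (1 : ℝ) ≤ ((b1 * (B * (n * ((b2 * (p * b4 * (b3 * n) * b5)) * (Q / n) ^ c)))) *
      (b2 * (p * ((b3 * n) * b1))) ^ (d - 1)) ^ n := by
    refine h.trans ?_
    refine okb_mp (okb_mp a1 (okb_mp le_rfl (okb_mp a9 (okb_mp (okb_mp a2 (okb_mp (okb_mp
      (okb_mp a11 a4 ?_ ?_) a8 ?_ ?_) a5 ?_ ?_) ?_ ?_) a10 ?_ ?_) ?_ ?_) ?_ ?_) ?_ ?_) a13 ?_ ?_
    all_goals positivity
  have a15 := (one_le_pow_iff_of_nonneg (by positivity) hn0.ne').1 a14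
  have e1 := okb_alg B C b1 b2 b3 b4 b5 Q n hnr d k c hd hc p hp
  rw [e1, le_div_iff₀ hnr, one_mul] at a15
  refine le_trans ?_ a15
  exact_mod_cast hXXn

theorem OkbData.contra {K : Type} [Field K] [NumberField K] {I J : Type} [Fintype I] [Fintype J]
    [Nonempty I] (D : OkbData K I J) (h : Fintype.card I < Fintype.card J)
    (hd : Module.finrank ℚ K = Fintype.card J) : False := by
  classical
  have hJ : 0 < Fintype.card J := by omega
  have : Nonempty J := Fintype.card_pos_iff.1 hJ
  obtain ⟨B, hB1, h1, h2, h2', h3, h3', h4⟩ := D.bounds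
  obtain ⟨C, hC1, hC⟩ := D.exists_siegel B hB1 h1 h3
  obtain ⟨S, hS, E, hE⟩ := okb_final B C hB1 hC1 (Fintype.card J) (Fintype.card I) hJ
  obtain ⟨X0, hX0⟩ := exists_nat_gt E
  set X := X0 + 2 * (S + 1) with hX
  have hXpos : 0 < X := by omega
  set d := Fintype.card J with hdd
  set k := Fintype.card I with hk
  have hXE : E < X := by
    refine hX0.trans_le ?_
    exact_mod_cast (by omega : X0 ≤ X)
  obtain ⟨p, hp0, hp, hpv⟩ := hC (2 * S * X ^ (d - 1)) S (X ^ d) (by positivity) hS (by positivity)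
    (by
      calc 2 * ((X ^ d) ^ k * S ^ d) ≤ 2 ^ d * ((X ^ d) ^ (d - 1) * S ^ d) := by
            gcongr
            · exact Nat.le_self_pow (by omega) 2
            · exact Nat.one_le_pow _ _ hXpos
            · omega
        _ = _ := by
          rw [mul_pow, mul_pow, ← pow_mul, ← pow_mul, mul_comm (d - 1) d]; ring)
  obtain ⟨n, hn, hvan, hex⟩ := D.exists_min _ S (X ^ d) hS p hp0 hpv
  obtain ⟨N0, hN0, hN0'⟩ := okb_ceil n d hJ
  have hXr : (0 : ℝ) < X := by exact_mod_cast hXpos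
  have hfin := D.step3 B hB1 h1 h2 h2' h3 h3' h4 (2 * S * X ^ (d - 1)) S n N0 (by positivity) hS
    hN0' p _ (by positivity) hp hvan hex (n / (X : ℝ) ^ (d - 1)) (by
      rw [le_div_iff₀ (by positivity)]
      calc 2 * ((S : ℝ) + 1) * (X : ℝ) ^ (d - 1) ≤ X * (X : ℝ) ^ (d - 1) := by
            gcongr
            exact_mod_cast (by omega : 2 * (S + 1) ≤ X)
        _ = (X : ℝ) ^ d := by rw [← pow_succ', Nat.sub_add_cancel hJ]
        _ ≤ n := by exact_mod_cast hn)
  rw [hd] at hfin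
  have := hE X (by omega) n N0 hn hN0 hfin
  linarith

lemma okb_dual {K : Type} [Field K] [NumberField K] [DecidableEq (K ≃ₐ[ℚ] K)] (ι : K →+* ℂ) {J : Type} [Fintype J]
    (b : Module.Basis J ℚ K) :
    ∃ N : (K ≃ₐ[ℚ] K) → J → ℂ, ∀ g h, ∑ j, N g j * ι (h (b j)) = if g = h then 1 else 0 := by
  classical
  set v : (K ≃ₐ[ℚ] K) → (J → ℂ) := fun h j => ι (h (b j)) with hv
  have hker : (Fintype.linearCombination ℂ v).ker = ⊥ := by
    rw [LinearMap.ker_eq_bot']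
    intro a ha
    have h1 : ∀ y : K, ∑ h, a h * ι (h y) = 0 := by
      intro y
      have h2 : ∀ h : K ≃ₐ[ℚ] K, ι (h y) = ∑ j, ((b.repr y j : ℚ) : ℂ) * ι (h (b j)) := by
        intro h
        conv_lhs => rw [← b.sum_repr y]
        simp [map_sum, Algebra.smul_def]
      simp_rw [h2, Finset.mul_sum]
      rw [Finset.sum_comm]
      refine Finset.sum_eq_zero fun j _ => ?_
      have h3 := congrFun ha j
      simp only [Fintype.linearCombination_apply, Finset.sum_apply, Pi.smul_apply, smul_eq_mul,
        Pi.zero_apply, hv] at h3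
      calc _ = ((b.repr y j : ℚ) : ℂ) * ∑ h, a h * ι (h (b j)) := by
            rw [Finset.mul_sum]; refine Finset.sum_congr rfl fun h _ => by ring
        _ = 0 := by rw [h3, mul_zero]
    have hli := linearIndependent_monoidHom K ℂ
    have hinj : Function.Injective (fun h : K ≃ₐ[ℚ] K =>
        ((ι.comp (h : K →+* K) : K →+* ℂ) : K →* ℂ)) := by
      intro g h hgh
      ext y
      apply ι.injective
      have := DFunLike.congr_fun hgh y
      simpa using this
    have hli2 := hli.comp _ hinj
    rw [Fintype.linearIndependent_iff] at hli2
    funext h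
    refine hli2 a ?_ h
    funext y
    simpa using h1 y
  obtain ⟨φ, hφ⟩ := LinearMap.exists_leftInverse_of_injective _ hker
  refine ⟨fun g j => φ (Pi.single j 1) g, fun g h => ?_⟩
  have h1 : φ (v h) = Pi.single h 1 := by
    have := LinearMap.congr_fun hφ (Pi.single h 1)
    simpa [Fintype.linearCombination_apply_single] using this
  have h2 : φ (v h) = ∑ j, v h j • φ (Pi.single j 1) := by
    conv_lhs => rw [pi_eq_sum_univ' (v h)]
    simp only [map_sum, map_smul]
  have h3 := congrFun (h2.symm.trans h1) g
  simp only [Finset.sum_apply, Pi.smul_apply, smul_eq_mul, hv, Pi.single_apply] at h3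
  rw [← h3]
  exact Finset.sum_congr rfl fun j _ => mul_comm _ _

open NumberField in
lemma okb_denom {K : Type} [Field K] [NumberField K] {A : Type} [Fintype A] (α : A → K) :
    ∃ δ : ℕ, 0 < δ ∧ ∀ a, ∃ θ : 𝓞 K, (θ : K) = δ * α a := by
  classical
  obtain ⟨y, hy, h⟩ := exists_integral_multiples ℤ ℚ (Finset.univ.image α)
  refine ⟨y.natAbs, Int.natAbs_pos.2 hy, fun a => ?_⟩
  have h1 := h (α a) (by simp)
  have h2 : IsIntegral ℤ ((y.natAbs : K) * α a) := by
    rcases Int.natAbs_eq y with h3 | h3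
    · rw [h3] at h1; simpa using h1
    · rw [h3] at h1
      have := h1.neg
      simpa using this
  exact ⟨⟨_, h2⟩, rfl⟩

open NumberField in
theorem okb_core {K : Type} [Field K] [NumberField K] [IsGalois ℚ K] (ι : K →+* ℂ)
    (c : (K ≃ₐ[ℚ] K) → ℂ) (hexp : ∀ y : 𝓞 K, ∃ α : K, ι α = Complex.exp (∑ g, c g * ι (g y)))
    (g0 : K ≃ₐ[ℚ] K) (hg0 : c g0 = 0) : ∀ g, c g = 0 := by
  classical
  by_contra! hne
  let I := {g : K ≃ₐ[ℚ] K // c g ≠ 0}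
  let J := Module.Free.ChooseBasisIndex ℤ (𝓞 K)
  let b := RingOfIntegers.basis K
  have : Nonempty I := let ⟨g, hg⟩ := hne; ⟨⟨g, hg⟩⟩
  have hcard : Module.finrank ℚ K = Fintype.card J := by
    rw [← RingOfIntegers.rank, Module.finrank_eq_card_basis b]
  have hG : Fintype.card (K ≃ₐ[ℚ] K) = Fintype.card J := by
    rw [← hcard, ← Nat.card_eq_fintype_card, IsGalois.card_aut_eq_finrank]
  have hIJ : Fintype.card I < Fintype.card J := by
    rw [← hG]
    exact Fintype.card_subtype_lt (x := g0) (by simpa using hg0)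
  obtain ⟨N, hN⟩ := okb_dual ι (integralBasis K)
  simp only [integralBasis_apply] at hN
  choose α hα using fun jk : J × J => hexp (b jk.1 * b jk.2)
  obtain ⟨δ, hδ, hθ⟩ := okb_denom α
  choose θ hθ using hθ
  let Λ : 𝓞 K →+ ℂ :=
    { toFun := fun y => ∑ g, c g * ι (g y)
      map_zero' := by simp
      map_add' := by intro x y; simp [mul_add, Finset.sum_add_distrib] }
  have hΛ : ∀ y, Λ y = ∑ g, c g * ι (g y) := fun y => rfl
  let D : OkbData K I J :=
    { ι := ι
      b := b
      hb := b.linearIndependent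
      x := fun g => RingOfIntegers.mapRingHom (g.1 : K →+* K)
      hx := by
        intro g x y hxy
        have := congrArg (fun z : 𝓞 K => (z : K)) hxy
        simp only [RingOfIntegers.mapRingHom_apply] at this
        ext
        exact g.1.injective this
      Λ := Λ
      m1 := fun j g => c g.1 * ι (g.1 (b j))
      hm1 := by
        intro j y
        rw [hΛ]
        have h1 : ∑ g : I, c g.1 * ι (g.1 (y * b j : 𝓞 K)) = ∑ g, c g * ι (g (y * b j : 𝓞 K)) := by
          rw [← Finset.sum_subtype (Finset.univ.filter (fun g => c g ≠ 0)) (by simp)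
            (fun g => c g * ι (g (y * b j : 𝓞 K)))]
          refine Finset.sum_subset (Finset.subset_univ _) fun g _ hg => ?_
          have : c g = 0 := by simpa using hg
          rw [this, zero_mul]
        rw [← h1]
        refine Finset.sum_congr rfl fun g _ => ?_
        simp only [RingOfIntegers.mapRingHom_apply, map_mul]
        push_cast
        simp; ring
      m2 := fun g j => N g.1 j / c g.1
      hm2 := by
        intro g y
        have h1 : ∑ j, N g.1 j * Λ (y * b j) = c g.1 * ι (g.1 y) := by
          simp_rw [hΛ, Finset.mul_sum]
          rw [Finset.sum_comm]
          have h2 : ∀ h : K ≃ₐ[ℚ] K, ∑ j, N g.1 j * (c h * ι (h (y * b j : 𝓞 K))) =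
              c h * ι (h y) * (if g.1 = h then 1 else 0) := by
            intro h
            rw [← hN g.1 h, Finset.mul_sum]
            refine Finset.sum_congr rfl fun j _ => ?_
            push_cast
            rw [map_mul, map_mul]
            ring
          simp_rw [h2]
          simp
        have h3 : c g.1 ≠ 0 := g.2
        simp_rw [div_mul_eq_mul_div]
        rw [← Finset.sum_div, h1]
        field_simp
        rfl
      θ := fun j k => θ (j, k)
      δ := δ
      hδ := hδ
      hθ := by
        intro j k
        rw [hθ, map_mul, hα, map_natCast]
        rfl }
  exact D.contra hIJ hcard

theorem okb_baker {K : Type} [Field K] [NumberField K] [IsGalois ℚ K] (ι : K →+* ℂ)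
    {A : Type} [Fintype A] (β : A → K) (lam : A → ℂ) (hlam : ∀ a, ∃ α : K, ι α = Complex.exp (lam a))
    (h0 : ∑ a, ι (β a) * lam a = 0) (g : K ≃ₐ[ℚ] K) : ∑ a, ι (g (β a)) * lam a = 0 := by
  classical
  obtain ⟨δ, hδ, hθ⟩ := okb_denom β
  choose θ hθ using hθ
  choose α hα using hlam
  have hc : ∀ h : K ≃ₐ[ℚ] K, ∑ a, ι (h (θ a)) * lam a = δ * ∑ a, ι (h (β a)) * lam a := by
    intro h
    rw [Finset.mul_sum]
    refine Finset.sum_congr rfl fun a _ => ?_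
    rw [hθ]; simp; ring
  have key := okb_core ι (fun h => ∑ a, ι (h (θ a)) * lam a) ?_ 1 (by
    rw [hc 1]; simp [h0]) g
  · rw [hc] at key
    refine (mul_eq_zero.1 key).resolve_left ?_
    exact_mod_cast hδ.ne'
  · intro y
    have ht : ∀ a, ∃ t : ℤ, ∑ h : K ≃ₐ[ℚ] K, ι (h ((y : K) * (θ a : K))) = t := by
      intro a
      have h1 : IsIntegral ℤ ((y : K) * (θ a : K)) :=
        (NumberField.RingOfIntegers.isIntegral_coe y).mul (NumberField.RingOfIntegers.isIntegral_coe _)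
      obtain ⟨t, ht⟩ := (IsIntegrallyClosed.isIntegral_iff (R := ℤ) (K := ℚ)).1
        (Algebra.isIntegral_trace (L := ℚ) h1)
      refine ⟨t, ?_⟩
      rw [← map_sum, ← trace_eq_sum_automorphisms, ← ht]
      simp
    choose t ht using ht
    refine ⟨∏ a, α a ^ (t a), ?_⟩
    have : ∑ h : K ≃ₐ[ℚ] K, (∑ a, ι (h (θ a)) * lam a) * ι (h y) = ∑ a, (t a : ℂ) * lam a := by
      simp_rw [Finset.sum_mul]
      rw [Finset.sum_comm]
      refine Finset.sum_congr rfl fun a _ => ?_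
      rw [← ht a, Finset.sum_mul]
      refine Finset.sum_congr rfl fun h _ => ?_
      rw [map_mul, map_mul]; ring
    rw [this, Complex.exp_sum, map_prod]
    refine Finset.prod_congr rfl fun a _ => ?_
    rw [map_zpow₀, hα, ← Complex.exp_int_mul]

lemma okc_log (z : ℂ) (hz : ‖z‖ = 1) (hz1 : z ≠ 1) :
    Tendsto (fun N : ℕ => ∑ n ∈ Finset.Icc 1 N, z ^ n / n) atTop (𝓝 (-Complex.log (1 - z))) := by
  have hz1' : z - 1 ≠ 0 := sub_ne_zero.2 hz1
  have hc : CauchySeq fun n => ∑ i ∈ Finset.range n, ((1 : ℝ) / (i + 1)) • z ^ (i + 1) := by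
    apply Antitone.cauchySeq_series_mul_of_tendsto_zero_of_bounded (b := 2 / ‖z - 1‖)
    · intro a b hab
      simp only
      gcongr
    · exact tendsto_one_div_add_atTop_nhds_zero_nat
    · intro n
      simp_rw [pow_succ]
      rw [← Finset.sum_mul, geom_sum_eq hz1, norm_mul, norm_div, hz, mul_one]
      gcongr
      calc ‖z ^ n - 1‖ ≤ ‖z ^ n‖ + ‖(1 : ℂ)‖ := norm_sub_le _ _
        _ = 2 := by rw [norm_pow, hz]; norm_num
  obtain ⟨l, hl⟩ := cauchySeq_tendsto_of_complete hc
  have e1 : ∀ N : ℕ, ∑ n ∈ Finset.Icc 1 N, z ^ n / n =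
      ∑ i ∈ Finset.range N, ((1 : ℝ) / (i + 1)) • z ^ (i + 1) := by
    intro N
    rw [← Finset.Ico_add_one_right_eq_Icc, Finset.sum_Ico_eq_sum_range]
    refine Finset.sum_congr (by simp) fun i _ => ?_
    rw [Complex.real_smul]
    push_cast
    rw [add_comm 1 i, add_comm (1 : ℂ)]; ring
  have e2 : ∀ N : ℕ, ∑ n ∈ Finset.range (N + 1), z ^ n / n = ∑ n ∈ Finset.Icc 1 N, z ^ n / n := by
    intro N
    rw [Finset.sum_range_succ', e1]
    simp only [pow_zero, Nat.cast_zero, div_zero, add_zero]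
    refine Finset.sum_congr rfl fun i _ => ?_
    rw [Complex.real_smul]
    push_cast; ring
  have h1 : Tendsto (fun N : ℕ => ∑ n ∈ Finset.Icc 1 N, z ^ n / n) atTop (𝓝 l) := by
    simp_rw [e1]; exact hl
  have h2 : Tendsto (fun N : ℕ => ∑ n ∈ Finset.range N, z ^ n / n) atTop (𝓝 l) := by
    rw [← tendsto_add_atTop_iff_nat 1]
    simp_rw [e2]; exact h1
  have h3 := Complex.tendsto_tsum_powerSeries_nhdsWithin_lt h2
  rw [tendsto_map'_iff] at h3
  have h4 : Tendsto (fun r : ℝ => -Complex.log (1 - z * r)) (𝓝[<] 1) (𝓝 (-Complex.log (1 - z))) := by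
    have hs : 1 - z ∈ Complex.slitPlane := by
      left
      have h5 : z.re ≤ 1 := (Complex.re_le_norm z).trans hz.le
      have h6 : z.re ≠ 1 := by
        intro h
        apply hz1
        have h7 := Complex.sq_norm z
        rw [hz, Complex.normSq_apply, h] at h7
        have : z.im = 0 := by nlinarith
        exact Complex.ext h this
      simp only [Complex.sub_re, Complex.one_re, sub_pos]
      exact lt_of_le_of_ne h5 h6
    have hco : ContinuousAt (fun r : ℝ => -Complex.log (1 - z * r)) 1 := by
      apply ContinuousAt.neg
      apply ContinuousAt.clog
      · fun_prop
      · simpa using hs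
    have := hco.tendsto
    simp only [Complex.ofReal_one, mul_one] at this
    exact this.mono_left nhdsWithin_le_nhds
  have h5 : Tendsto (fun r : ℝ => -Complex.log (1 - z * r)) (𝓝[<] 1) (𝓝 l) := by
    refine h3.congr' ?_
    have : ∀ᶠ r : ℝ in 𝓝[<] 1, r ∈ Set.Ioo (0 : ℝ) 1 := Ioo_mem_nhdsLT (by norm_num)
    filter_upwards [this] with r hr
    have hn : ‖z * r‖ < 1 := by
      rw [norm_mul, hz, one_mul, Complex.norm_real, Real.norm_eq_abs, abs_of_pos hr.1]
      exact hr.2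
    rw [← (Complex.hasSum_taylorSeries_neg_log hn).tsum_eq]
    simp only [Function.comp_apply]
    refine tsum_congr fun n => ?_
    rw [mul_pow]; ring
  rw [tendsto_nhds_unique h4 h5]
  exact h1

lemma okc_toeplitz (b : ℕ → ℂ) (l : ℂ) (hb : Tendsto (fun n => ∑ k ∈ range n, b k) atTop (𝓝 l))
    (w : ℝ → ℕ → ℝ) (T : ℝ → ℂ) (hw1 : ∀ x > 0, Antitone (w x)) (hw0 : ∀ x, w x 0 = 1)
    (hw2 : ∀ x > 0, Tendsto (w x) atTop (𝓝 0))
    (hw3 : ∀ n, Tendsto (fun x => w x n) (𝓝[>] 0) (𝓝 1))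
    (hT : ∀ x > 0, HasSum (fun n => (w x n : ℂ) * b n) (T x)) :
    Tendsto T (𝓝[>] 0) (𝓝 l) := by
  obtain ⟨M, hM⟩ : ∃ M : ℝ, ∀ n, ‖∑ k ∈ range n, b k - l‖ ≤ M := by
    have := (hb.sub_const l).norm.bddAbove_range
    obtain ⟨M, hM⟩ := this
    exact ⟨M, fun n => hM ⟨n, rfl⟩⟩
  have hM0 : 0 ≤ M := (norm_nonneg _).trans (hM 0)
  have key : ∀ ε > 0, ∃ K, ∀ x > 0, ‖T x - l‖ ≤ M * (1 - w x K) + ε := by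
    intro ε hε
    obtain ⟨K, hK⟩ := Metric.tendsto_atTop.1 hb ε hε
    refine ⟨K, fun x hx => ?_⟩
    have hanti := hw1 x hx
    have hpos : ∀ n, 0 ≤ w x n := fun n => hanti.le_of_tendsto (hw2 x hx) n
    -- finite bound
    have hfin : ∀ N : ℕ, ‖∑ k ∈ range (N + 1), (w x k : ℂ) * b k - l‖ ≤
        w x N * M + (M * (1 - w x K) + ε) := by
      intro N
      set b' : ℕ → ℂ := fun k => if k = 0 then b 0 - l else b k with hb'
      have hs : ∀ n, ∑ k ∈ range (n + 1), b' k = ∑ k ∈ range (n + 1), b k - l := by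
        intro n
        rw [Finset.sum_range_succ', Finset.sum_range_succ' b]
        simp [hb']; ring
      have hs2 : ∑ k ∈ range (N + 1), (w x k : ℂ) * b k - l =
          ∑ k ∈ range (N + 1), (w x k : ℂ) • b' k := by
        rw [Finset.sum_range_succ', Finset.sum_range_succ' (fun k => (w x k : ℂ) • b' k)]
        simp [hb', hw0]; ring
      rw [hs2, Finset.sum_range_by_parts]
      simp only [Nat.add_sub_cancel, hs]
      have h1 : ‖∑ i ∈ range N, ((w x (i + 1) : ℂ) - w x i) • (∑ k ∈ range (i + 1), b k - l)‖ ≤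
          M * (1 - w x K) + ε := by
        have h2 : ∀ i ∈ range N, ‖((w x (i + 1) : ℂ) - w x i) • (∑ k ∈ range (i + 1), b k - l)‖ ≤
            M * (w x (min i K) - w x (min (i + 1) K)) + ε * (w x i - w x (i + 1)) := by
          intro i _
          have h3 : ‖((w x (i + 1) : ℂ) - w x i)‖ = w x i - w x (i + 1) := by
            rw [← Complex.ofReal_sub, Complex.norm_real, Real.norm_eq_abs, abs_sub_comm, abs_of_nonneg]
            linarith [hanti (Nat.le_succ i)]
          have h4 : 0 ≤ w x i - w x (i + 1) := by linarith [hanti (Nat.le_succ i)]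
          rw [norm_smul, h3]
          by_cases hi : i < K
          · rw [min_eq_left hi.le, min_eq_left (Nat.succ_le_of_lt hi)]
            have := mul_le_mul_of_nonneg_left (hM (i + 1)) h4
            have h5 : 0 ≤ ε * (w x i - w x (i + 1)) := by positivity
            linarith
          · rw [min_eq_right (by omega), min_eq_right (by omega)]
            have h6 := (hK (i + 1) (by omega)).le
            rw [dist_eq_norm] at h6
            have := mul_le_mul_of_nonneg_left h6 h4
            linarith
        refine (norm_sum_le_of_le _ h2).trans ?_
        rw [Finset.sum_add_distrib, ← Finset.mul_sum, ← Finset.mul_sum,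
          Finset.sum_range_sub' (fun i => w x (min i K)), Finset.sum_range_sub' (fun i => w x i)]
        simp only [Nat.zero_min, hw0]
        have h7 : w x K ≤ w x (min N K) := hanti (min_le_right _ _)
        have h8 := hpos N
        have : M * (1 - w x (min N K)) ≤ M * (1 - w x K) := by gcongr
        nlinarith
      refine (norm_sub_le _ _).trans (add_le_add ?_ h1)
      rw [norm_smul, Complex.norm_real, Real.norm_eq_abs, abs_of_nonneg (hpos N)]
      exact mul_le_mul_of_nonneg_left (hM _) (hpos N)
    have t1 : Tendsto (fun N : ℕ => ‖∑ k ∈ range (N + 1), (w x k : ℂ) * b k - l‖) atTop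
        (𝓝 ‖T x - l‖) :=
      ((((hT x hx).tendsto_sum_nat).comp (tendsto_add_atTop_nat 1)).sub_const l).norm
    have t2 : Tendsto (fun N : ℕ => w x N * M + (M * (1 - w x K) + ε)) atTop
        (𝓝 (0 * M + (M * (1 - w x K) + ε))) := ((hw2 x hx).mul_const M).add_const _
    have := le_of_tendsto_of_tendsto' t1 t2 hfin
    simpa using this
  rw [Metric.tendsto_nhds]
  intro ε hε
  obtain ⟨K, hK⟩ := key (ε / 2) (by positivity)
  have t3 : Tendsto (fun x => M * (1 - w x K) + ε / 2) (𝓝[>] 0) (𝓝 (M * (1 - 1) + ε / 2)) :=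
    (((hw3 K).const_sub 1).const_mul M).add_const _
  have t4 := t3.eventually (gt_mem_nhds (show M * (1 - 1) + ε / 2 < ε by simp; linarith))
  filter_upwards [t4, self_mem_nhdsWithin] with x hx hx0
  rw [dist_eq_norm]
  exact (hK x hx0).trans_lt hx

lemma okc_abel (F : ℕ → ℂ) (C : ℝ) (hF : ∀ n, ‖F n‖ ≤ C) (l : ℂ)
    (hlim : Tendsto (fun N : ℕ => ∑ n ∈ Finset.Icc 1 N, F n / n) atTop (𝓝 l)) :
    Tendsto (fun s : ℝ => LSeries F s) (𝓝[>] 1) (𝓝 l) := by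
  have e1 : ∀ N : ℕ, ∑ n ∈ Finset.Icc 1 N, F n / n =
      ∑ i ∈ Finset.range N, F (i + 1) / ((i + 1 : ℕ) : ℂ) := by
    intro N
    rw [← Finset.Ico_add_one_right_eq_Icc, Finset.sum_Ico_eq_sum_range]
    refine Finset.sum_congr (by simp) fun i _ => ?_
    rw [add_comm 1 i]
  simp_rw [e1] at hlim
  have key := okc_toeplitz (fun i => F (i + 1) / ((i + 1 : ℕ) : ℂ)) l hlim
    (fun x n => ((n : ℝ) + 1) ^ (-x)) (fun x => LSeries F ((1 + x : ℝ) : ℂ)) ?_ ?_ ?_ ?_ ?_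
  · have t : Tendsto (fun s : ℝ => s - 1) (𝓝[>] 1) (𝓝[>] 0) := by
      apply tendsto_nhdsWithin_iff.2
      refine ⟨?_, ?_⟩
      · have : Tendsto (fun s : ℝ => s - 1) (𝓝 1) (𝓝 (1 - 1)) := tendsto_id.sub_const 1
        rw [sub_self] at this
        exact this.mono_left nhdsWithin_le_nhds
      · filter_upwards [self_mem_nhdsWithin] with s hs
        simpa using hs
    have := key.comp t
    refine this.congr fun s => ?_
    simp
  · intro x hx a b hab
    simp only
    exact Real.rpow_le_rpow_of_nonpos (by positivity) (by gcongr) (by linarith)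
  · intro x; simp
  · intro x hx
    have := (tendsto_rpow_neg_atTop hx).comp (tendsto_natCast_atTop_atTop.comp (tendsto_add_atTop_nat 1))
    refine this.congr fun n => ?_
    simp
  · intro n
    have hco : Continuous (fun x : ℝ => ((n : ℝ) + 1) ^ (-x)) := by
      have : (n : ℝ) + 1 ≠ 0 := by positivity
      exact Continuous.rpow continuous_const continuous_neg (fun x => Or.inl this)
    have := hco.tendsto 0
    simp only [neg_zero, Real.rpow_zero] at this
    exact this.mono_left nhdsWithin_le_nhds
  · intro x hx
    have hs : LSeriesSummable F ((1 + x : ℝ) : ℂ) := by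
      apply LSeriesSummable_of_bounded_of_one_lt_re (m := C)
      · intro n _; exact hF n
      · simp only [Complex.ofReal_re]; linarith
    have h1 := hs.LSeriesHasSum
    have h2 := (hasSum_nat_add_iff' 1).2 h1
    simp only [Finset.range_one, Finset.sum_singleton, LSeries.term_zero, sub_zero] at h2
    have e0 : ∀ g : ℕ → ℂ, (∀ n, g n = LSeries.term F ((1 + x : ℝ) : ℂ) (n + 1)) →
        HasSum g (LSeries F ((1 + x : ℝ) : ℂ)) := by
      intro g hg
      rw [funext hg]; exact h2
    refine e0 _ fun n => ?_
    rw [LSeries.term_of_ne_zero (by omega)]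
    have hn : ((n + 1 : ℕ) : ℂ) ≠ 0 := by exact_mod_cast Nat.succ_ne_zero n
    have hn0 : (0 : ℝ) ≤ (n : ℝ) + 1 := by positivity
    have e : ((((n : ℝ) + 1) ^ (-x) : ℝ) : ℂ) = ((n + 1 : ℕ) : ℂ) ^ (-(x : ℂ)) := by
      rw [Complex.ofReal_cpow hn0]; push_cast; rfl
    rw [e]
    push_cast at hn ⊢
    rw [Complex.cpow_add _ _ hn, Complex.cpow_one, Complex.cpow_neg]
    field_simp

noncomputable def okcLv (q : ℕ) [NeZero q] (Φ : ZMod q → ℂ) : ℂ :=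
  ∑ k, ZMod.dft Φ k * Complex.log (1 - ZMod.stdAddChar k)

lemma okc_sac_pow (q : ℕ) [NeZero q] (k : ZMod q) (n : ℕ) :
    (ZMod.stdAddChar k : ℂ) ^ n = ZMod.stdAddChar (k * (n : ZMod q)) := by
  rw [← AddChar.map_nsmul_eq_pow, nsmul_eq_mul, mul_comm]

lemma okc_sac_pow_val (q : ℕ) [NeZero q] (k u : ZMod q) :
    (ZMod.stdAddChar k : ℂ) ^ u.val = ZMod.stdAddChar (k * u) := by
  rw [okc_sac_pow, ZMod.natCast_zmod_val]

lemma okc_lim (q : ℕ) [NeZero q] (Φ : ZMod q → ℂ) (h0 : ∑ j, Φ j = 0) :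
    Tendsto (fun N : ℕ => ∑ n ∈ Finset.Icc 1 N, Φ n / n) atTop (𝓝 (-(q : ℂ)⁻¹ * okcLv q Φ)) := by
  have hq : (q : ℂ) ≠ 0 := NeZero.ne _
  have e : ∀ n : ℕ, Φ n = (q : ℂ)⁻¹ * ∑ k, ZMod.dft Φ k * (ZMod.stdAddChar k : ℂ) ^ n := by
    intro n
    have := ZMod.invDFT_apply (ZMod.dft Φ) (n : ZMod q)
    rw [LinearEquiv.symm_apply_apply] at this
    rw [this, smul_eq_mul]
    congr 1
    refine Finset.sum_congr rfl fun k _ => ?_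
    rw [okc_sac_pow, smul_eq_mul, mul_comm]
  have e2 : ∀ N : ℕ, ∑ n ∈ Finset.Icc 1 N, Φ n / n =
      (q : ℂ)⁻¹ * ∑ k, ZMod.dft Φ k * ∑ n ∈ Finset.Icc 1 N, (ZMod.stdAddChar k : ℂ) ^ n / n := by
    intro N
    simp_rw [Finset.mul_sum]
    rw [Finset.sum_comm]
    refine Finset.sum_congr rfl fun n _ => ?_
    rw [e n, Finset.mul_sum, Finset.sum_div]
    refine Finset.sum_congr rfl fun k _ => ?_
    ring
  simp_rw [e2]
  have : -(q : ℂ)⁻¹ * okcLv q Φ = (q : ℂ)⁻¹ * ∑ k, ZMod.dft Φ k *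
      (-Complex.log (1 - ZMod.stdAddChar k)) := by
    simp [okcLv]
  rw [this]
  refine Tendsto.const_mul _ (tendsto_finsetSum _ fun k _ => ?_)
  by_cases hk : k = 0
  · subst hk
    rw [ZMod.dft_apply_zero, h0]
    simp
  · refine (okc_log _ ?_ ?_).const_mul _
    · exact AddChar.norm_apply _ _
    · intro h
      apply hk
      apply ZMod.injective_stdAddChar
      rw [h]; simp

lemma okc_galois (q : ℕ) [NeZero q] (F : ZMod q → ℚ)
    (hL : okcLv q (fun j => (F j : ℂ)) = 0) (u : (ZMod q)ˣ) :
    okcLv q (fun j => (F (u * j) : ℂ)) = 0 := by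
  suffices H : ∀ (K : Type) [Field K] [NumberField K] [IsCyclotomicExtension {q} ℚ K],
      okcLv q (fun j => (F (u * j) : ℂ)) = 0 by
    have i1 : NeZero ((q : ℕ) : ℚ) := ⟨by exact_mod_cast NeZero.ne q⟩
    have i2 : IsCyclotomicExtension {q} ℚ (CyclotomicField q ℚ) := by
      convert CyclotomicField.isCyclotomicExtension q ℚ
      · rfl
      · exact Subsingleton.elim _ _
    exact H (CyclotomicField q ℚ)
  intro K _ _ _
  have : IsGalois ℚ K := IsCyclotomicExtension.isGalois {q} ℚ K
  let ι : K →+* ℂ := (Classical.arbitrary (K →+* ℂ))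
  have hz := (IsCyclotomicExtension.zeta_spec q ℚ K).map_of_injective ι.injective
  have hw : ∀ k : ZMod q, ∃ w : K, ι w = ZMod.stdAddChar k ∧ w ^ q = 1 := by
    intro k
    have h1 : (ZMod.stdAddChar k : ℂ) ^ q = 1 := by
      rw [okc_sac_pow]; simp
    obtain ⟨i, -, hi⟩ := hz.eq_pow_of_pow_eq_one h1
    refine ⟨IsCyclotomicExtension.zeta q ℚ K ^ i, by rw [map_pow, hi], ?_⟩
    rw [← pow_mul, mul_comm, pow_mul, (IsCyclotomicExtension.zeta_spec q ℚ K).pow_eq_one, one_pow]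
  choose w hw1 hw2 using hw
  obtain ⟨g, hg⟩ := (IsCyclotomicExtension.Rat.galEquivZMod q K).surjective u⁻¹
  have hgw : ∀ k : ZMod q, ι (g (w k)) = ZMod.stdAddChar (k * ((u⁻¹ : (ZMod q)ˣ) : ZMod q)) := by
    intro k
    rw [IsCyclotomicExtension.Rat.galEquivZMod_apply_of_pow_eq q K g (hw2 k), hg, map_pow, hw1,
      okc_sac_pow_val]
  have key := okb_baker ι (fun k : ZMod q => ∑ j, w (-(j * k)) * algebraMap ℚ K (F j))
    (fun k => Complex.log (1 - ZMod.stdAddChar k)) ?_ ?_ g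
  · rw [← key, okcLv]
    refine Finset.sum_congr rfl fun k _ => ?_
    congr 1
    rw [ZMod.dft_comp_unitMul (fun j => (F j : ℂ)) u k, ZMod.dft_apply, map_sum, map_sum]
    refine Finset.sum_congr rfl fun j _ => ?_
    rw [map_mul, map_mul, hgw, AlgEquiv.commutes]
    simp only [eq_ratCast, map_ratCast, smul_eq_mul]
    congr 2
    ring
  · intro k
    by_cases hk : k = 0
    · exact ⟨1, by subst hk; simp⟩
    · refine ⟨1 - w k, ?_⟩
      rw [map_sub, map_one, hw1, Complex.exp_log]
      intro h
      apply hk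
      apply ZMod.injective_stdAddChar
      rw [← sub_eq_zero.1 h]; simp
  · rw [← hL, okcLv]
    refine Finset.sum_congr rfl fun k _ => ?_
    congr 1
    rw [ZMod.dft_apply, map_sum]
    refine Finset.sum_congr rfl fun j _ => ?_
    rw [map_mul, hw1]
    simp

def okcM (q : ℕ) : Set ℕ := {b : ℕ | 0 < b ∧ ∀ p : ℕ, p.Prime → p ∣ b → p ∣ q}

noncomputable def okcS (q : ℕ) [NeZero q] (Φ : ZMod q → ℂ) : ℂ :=
  ∑' m : okcM q, Φ ((m : ℕ) : ZMod q) / ((m : ℕ) : ℂ)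

lemma okc_M_summable (q : ℕ) [NeZero q] : Summable (fun m : okcM q => ((m : ℕ) : ℝ)⁻¹) := by
  have hM : okcM q = Nat.factoredNumbers q.primeFactors := by
    ext m
    rw [Nat.mem_factoredNumbers']
    constructor
    · rintro ⟨_, h⟩ p hp hpm
      exact Nat.mem_primeFactors.2 ⟨hp, h p hp hpm, NeZero.ne q⟩
    · intro h
      refine ⟨?_, fun p hp hpm => (Nat.mem_primeFactors.1 (h p hp hpm)).2.1⟩
      exact Nat.pos_of_ne_zero (Nat.ne_zero_of_mem_factoredNumbers (Nat.mem_factoredNumbers'.2 h))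
  rw [hM]
  let f : ℕ →* ℝ := ⟨⟨fun n => (n : ℝ)⁻¹, by simp⟩, fun a b => by simp [mul_comm]⟩
  have := (EulerProduct.summable_and_hasSum_factoredNumbers_prod_filter_prime_geometric
    (f := f) ?_ q.primeFactors).1
  · refine this.congr fun m => ?_
    change ‖((m : ℕ) : ℝ)⁻¹‖ = _
    simp
  · intro p hp
    change ‖(p : ℝ)⁻¹‖ < 1
    rw [norm_inv, Real.norm_natCast]
    exact inv_lt_one_of_one_lt₀ (by exact_mod_cast hp.one_lt)

lemma okc_bdd (q : ℕ) [NeZero q] (Φ : ZMod q → ℂ) : ∃ C, ∀ j, ‖Φ j‖ ≤ C :=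
  ⟨∑ j, ‖Φ j‖, fun j => Finset.single_le_sum (f := fun j => ‖Φ j‖) (fun _ _ => norm_nonneg _)
    (Finset.mem_univ j)⟩

lemma okc_S_summable (q : ℕ) [NeZero q] (Φ : ZMod q → ℂ) :
    Summable (fun m : okcM q => Φ ((m : ℕ) : ZMod q) / ((m : ℕ) : ℂ)) := by
  obtain ⟨C, hC⟩ := okc_bdd q Φ
  refine Summable.of_norm_bounded ((okc_M_summable q).mul_left C) fun m => ?_
  rw [norm_div, Complex.norm_natCast, div_eq_mul_inv]
  exact mul_le_mul_of_nonneg_right (hC _) (by positivity)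

open Classical in
noncomputable def okcPM (q : ℕ) [NeZero q] (Φ : ZMod q → ℂ) (n : ℕ) : ℂ :=
  if n ∈ okcM q then Φ n else 0

lemma okc_PM_bdd (q : ℕ) [NeZero q] (Φ : ZMod q → ℂ) : ∃ C, ∀ n, ‖okcPM q Φ n‖ ≤ C := by
  obtain ⟨C, hC⟩ := okc_bdd q Φ
  refine ⟨C, fun n => ?_⟩
  unfold okcPM
  split_ifs
  · exact hC _
  · simpa using (norm_nonneg _).trans (hC 0)

lemma okc_PM_lim (q : ℕ) [NeZero q] (Φ : ZMod q → ℂ) :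
    Tendsto (fun s : ℝ => LSeries (okcPM q Φ) s) (𝓝[>] 1) (𝓝 (okcS q Φ)) := by
  obtain ⟨C, hC⟩ := okc_PM_bdd q Φ
  refine okc_abel _ C hC _ ?_
  have h1 := (okc_S_summable q Φ).hasSum
  have h2 := (hasSum_subtype_iff_indicator (f := fun n : ℕ => Φ n / n) (s := okcM q)).1 h1
  have h3 := h2.tendsto_sum_nat.comp (tendsto_add_atTop_nat 1)
  refine h3.congr fun N => ?_
  simp only [Function.comp]
  rw [Finset.sum_range_succ', ← Finset.Ico_add_one_right_eq_Icc, Finset.sum_Ico_eq_sum_range]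
  have : (okcM q).indicator (fun n : ℕ => Φ n / n) 0 = 0 := by
    simp [Set.indicator]
  rw [this, add_zero]
  refine Finset.sum_congr (by simp) fun i _ => ?_
  rw [add_comm 1 i]
  unfold okcPM
  by_cases h : i + 1 ∈ okcM q <;> simp [Set.indicator, h]

lemma okc_decomp (q : ℕ) [NeZero q] (n : ℕ) : n ≠ 0 →
    ∃ a b, a * b = n ∧ a ∈ okcM q ∧ b.Coprime q := by
  induction n using Nat.strong_induction_on with
  | _ n ih =>
    intro hn
    by_cases hc : n.Coprime q
    · refine ⟨1, n, by simp, ⟨one_pos, fun p hp h => ?_⟩, hc⟩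
      exact absurd (Nat.dvd_one.1 h) hp.ne_one
    · obtain ⟨p, hp, hpn, hpq⟩ := Nat.Prime.not_coprime_iff_dvd.1 hc
      obtain ⟨k, rfl⟩ := hpn
      have hk : k ≠ 0 := by rintro rfl; simp at hn
      obtain ⟨a, b, hab, ha, hb⟩ := ih k (by
        have := hp.two_le
        have := Nat.pos_of_ne_zero hk
        nlinarith) hk
      refine ⟨p * a, b, by rw [mul_assoc, hab], ⟨Nat.mul_pos hp.pos ha.1, ?_⟩, hb⟩
      intro r hr hra
      rcases (Nat.Prime.dvd_mul hr).1 hra with h | h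
      · rw [(Nat.prime_dvd_prime_iff_eq hr hp).1 h]; exact hpq
      · exact ha.2 r hr h

lemma okc_M_coprime (q : ℕ) {a b : ℕ} (ha : a ∈ okcM q) (hb : b.Coprime q) : a.Coprime b := by
  by_contra h
  obtain ⟨p, hp, h1, h2⟩ := Nat.Prime.not_coprime_iff_dvd.1 h
  have := Nat.dvd_gcd h2 (ha.2 p hp h1)
  rw [hb] at this
  exact hp.ne_one (Nat.dvd_one.1 this)

lemma okc_conv (q : ℕ) [NeZero q] (Φ : ZMod q → ℂ) (χ : DirichletCharacter ℂ q)
    (hΦ : ∀ (u : (ZMod q)ˣ) j, Φ (u * j) = χ u * Φ j) (n : ℕ) (hn : n ≠ 0) :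
    LSeries.convolution (okcPM q Φ) (fun n : ℕ => χ n) n = Φ n := by
  rw [LSeries.convolution_def]
  obtain ⟨a, b, hab, ha, hb⟩ := okc_decomp q n hn
  simp only
  rw [Finset.sum_eq_single (a, b)]
  · simp only [okcPM, ha, if_true]
    rw [← hab]
    push_cast
    have := hΦ (ZMod.unitOfCoprime b hb) a
    rw [ZMod.coe_unitOfCoprime] at this
    rw [mul_comm (a : ZMod q), this, mul_comm]
  · rintro ⟨c, d⟩ hcd hne
    simp only [okcPM]
    have hcd' := (Nat.mem_divisorsAntidiagonal.1 hcd).1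
    simp only at hcd'
    by_cases hc : c ∈ okcM q
    · by_cases hd : d.Coprime q
      · exfalso
        apply hne
        have h1 : a ∣ c := (okc_M_coprime q ha hd).dvd_of_dvd_mul_right ⟨b, by rw [hcd', hab]⟩
        have h2 : c ∣ a := (okc_M_coprime q hc hb).dvd_of_dvd_mul_right ⟨d, by rw [hcd', hab]⟩
        have h3 := Nat.dvd_antisymm h2 h1
        subst h3
        have : d = b := Nat.eq_of_mul_eq_mul_left ha.1 (by rw [hcd', hab])
        rw [this]
      · have : χ (d : ZMod q) = 0 := χ.map_nonunit (by rwa [ZMod.isUnit_iff_coprime])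
        rw [this, mul_zero]
    · simp [hc]
  · intro h
    exact absurd (Nat.mem_divisorsAntidiagonal.2 ⟨hab, hn⟩) h

lemma okc_LS_fac (q : ℕ) [NeZero q] (Φ : ZMod q → ℂ) (χ : DirichletCharacter ℂ q)
    (hΦ : ∀ (u : (ZMod q)ˣ) j, Φ (u * j) = χ u * Φ j) (s : ℝ) (hs : 1 < s) :
    LSeries (fun n : ℕ => Φ n) s =
      LSeries (okcPM q Φ) s * DirichletCharacter.LFunction χ (s : ℂ) := by
  rw [DirichletCharacter.LFunction_eq_LSeries χ (by simpa using hs), ← LSeries_convolution']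
  · refine LSeries_congr (fun {n} hn => ?_) _
    rw [okc_conv q Φ χ hΦ _ hn]
  · obtain ⟨C, hC⟩ := okc_PM_bdd q Φ
    exact LSeriesSummable_of_bounded_of_one_lt_re (m := C) (fun n _ => hC n) (by simpa using hs)
  · exact LSeriesSummable_of_bounded_of_one_lt_re (m := 1) (fun n _ => χ.norm_le_one _)
      (by simpa using hs)

lemma okc_LS_lim (q : ℕ) [NeZero q] (Φ : ZMod q → ℂ) (h0 : ∑ j, Φ j = 0) :
    Tendsto (fun s : ℝ => LSeries (fun n : ℕ => Φ n) s) (𝓝[>] 1) (𝓝 (-(q : ℂ)⁻¹ * okcLv q Φ)) := by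
  obtain ⟨C, hC⟩ := okc_bdd q Φ
  exact okc_abel _ C (fun n => hC n) _ (okc_lim q Φ h0)

lemma okc_real_ne : Tendsto (fun s : ℝ => (s : ℂ)) (𝓝[>] 1) (𝓝[≠] 1) := by
  apply tendsto_nhdsWithin_iff.2
  constructor
  · have : Tendsto (fun s : ℝ => (s : ℂ)) (𝓝 1) (𝓝 ((1 : ℝ) : ℂ)) :=
      Complex.continuous_ofReal.tendsto 1
    rw [Complex.ofReal_one] at this
    exact this.mono_left nhdsWithin_le_nhds
  · filter_upwards [self_mem_nhdsWithin] with s hs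
    have : (1 : ℝ) < s := hs
    simp only [Set.mem_compl_iff, Set.mem_singleton_iff]
    exact_mod_cast this.ne'

lemma okc_nontriv (q : ℕ) [NeZero q] (Φ : ZMod q → ℂ) (h0 : ∑ j, Φ j = 0)
    (χ : DirichletCharacter ℂ q) (hχ : χ ≠ 1)
    (hΦ : ∀ (u : (ZMod q)ˣ) j, Φ (u * j) = χ u * Φ j) : okcLv q Φ = 0 ↔ okcS q Φ = 0 := by
  have t1 := okc_LS_lim q Φ h0
  have t2 : Tendsto (fun s : ℝ => DirichletCharacter.LFunction χ (s : ℂ)) (𝓝[>] 1)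
      (𝓝 (DirichletCharacter.LFunction χ 1)) :=
    ((DirichletCharacter.differentiable_LFunction hχ).continuous.tendsto 1).comp
      (okc_real_ne.mono_right nhdsWithin_le_nhds)
  have t3 := (okc_PM_lim q Φ).mul t2
  have t4 := t3.congr' (f₂ := fun s : ℝ => LSeries (fun n : ℕ => Φ n) s) (by
    filter_upwards [self_mem_nhdsWithin] with s hs
    exact (okc_LS_fac q Φ χ hΦ s hs).symm)
  have e := tendsto_nhds_unique t1 t4
  have hq : (q : ℂ) ≠ 0 := NeZero.ne _
  have hL := DirichletCharacter.LFunction_apply_one_ne_zero hχ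
  constructor
  · intro h
    rw [h, mul_zero] at e
    exact (mul_eq_zero.1 e.symm).resolve_right hL
  · intro h
    rw [h, zero_mul] at e
    exact (mul_eq_zero.1 e).resolve_left (neg_ne_zero.2 (inv_ne_zero hq))

lemma okc_triv (q : ℕ) [NeZero q] (Φ : ZMod q → ℂ) (h0 : ∑ j, Φ j = 0)
    (hΦ : ∀ (u : (ZMod q)ˣ) j, Φ (u * j) = Φ j) : okcS q Φ = 0 := by
  have t1 := okc_LS_lim q Φ h0
  have t2 := (DirichletCharacter.LFunctionTrivChar_residue_one (N := q)).comp okc_real_ne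
  have t3 := (okc_PM_lim q Φ).mul t2
  have t0 : Tendsto (fun s : ℝ => ((s : ℂ) - 1)) (𝓝[>] 1) (𝓝 0) := by
    have := (okc_real_ne.mono_right nhdsWithin_le_nhds).sub_const 1
    rwa [sub_self] at this
  have t5 := t0.mul t1
  have t4 := t3.congr' (f₂ := fun s : ℝ => ((s : ℂ) - 1) * LSeries (fun n : ℕ => Φ n) s) (by
    filter_upwards [self_mem_nhdsWithin] with s hs
    rw [okc_LS_fac q Φ 1 (fun u j => by rw [hΦ u j]; simp) s hs]
    simp only [Function.comp, DirichletCharacter.LFunctionTrivChar]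
    ring)
  have e := tendsto_nhds_unique t5 t4
  rw [zero_mul] at e
  refine (mul_eq_zero.1 e.symm).resolve_right ?_
  refine Finset.prod_ne_zero_iff.2 ?_
  intro p hp h
  have h1 := (Nat.prime_of_mem_primeFactors hp).one_lt
  have h2 := sub_eq_zero.1 h
  have h3 : (p : ℂ) = 1 := by rw [← inv_inv (p : ℂ), ← h2, inv_one]
  have h4 : p = 1 := by exact_mod_cast h3
  omega

lemma okc_orth (q : ℕ) [NeZero q] (g : (ZMod q)ˣ → ℂ) (a : (ZMod q)ˣ) :
    ∑ χ : DirichletCharacter ℂ q, χ ((a : ZMod q)⁻¹) * ∑ h : (ZMod q)ˣ, χ h * g h =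
      q.totient * g a := by
  simp_rw [Finset.mul_sum]
  rw [Finset.sum_comm]
  simp_rw [← mul_assoc, ← Finset.sum_mul,
    DirichletCharacter.sum_char_inv_mul_char_eq ℂ a.isUnit]
  rw [Finset.sum_eq_single a]
  · simp
  · intro b _ hb
    rw [if_neg, zero_mul]
    intro h
    exact hb (Units.ext h.symm)
  · simp

lemma okc_Lv_sum (q : ℕ) [NeZero q] {ι : Type} (s : Finset ι) (c : ι → ℂ) (Φ : ι → ZMod q → ℂ) :
    okcLv q (fun j => ∑ i ∈ s, c i * Φ i j) = ∑ i ∈ s, c i * okcLv q (Φ i) := by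
  have : (fun j => ∑ i ∈ s, c i * Φ i j) = ∑ i ∈ s, c i • Φ i := by
    ext j; simp
  rw [this, okcLv, map_sum]
  simp only [okcLv, map_smul, Finset.sum_apply, Pi.smul_apply, smul_eq_mul, Finset.sum_mul,
    Finset.mul_sum]
  rw [Finset.sum_comm]
  refine Finset.sum_congr rfl fun i _ => Finset.sum_congr rfl fun k _ => ?_
  ring

lemma okc_S_sum (q : ℕ) [NeZero q] {ι : Type} (s : Finset ι) (c : ι → ℂ) (Φ : ι → ZMod q → ℂ) :
    okcS q (fun j => ∑ i ∈ s, c i * Φ i j) = ∑ i ∈ s, c i * okcS q (Φ i) := by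
  have h := hasSum_sum (s := s) (fun i _ => ((okc_S_summable q (Φ i)).hasSum.mul_left (c i)))
  refine Eq.trans ?_ h.tsum_eq
  unfold okcS
  refine tsum_congr fun m => ?_
  rw [Finset.sum_div]
  refine Finset.sum_congr rfl fun i _ => ?_
  ring

lemma okc_tw (q : ℕ) [NeZero q] (F : ZMod q → ℂ) (χ : DirichletCharacter ℂ q)
    (u : (ZMod q)ˣ) (j : ZMod q) :
    ∑ h : (ZMod q)ˣ, χ h * F (h * (u * j)) = χ⁻¹ u * ∑ h : (ZMod q)ˣ, χ h * F (h * j) := by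
  rw [← Equiv.sum_comp (Equiv.mulRight u⁻¹), Finset.mul_sum]
  refine Finset.sum_congr rfl fun h _ => ?_
  rw [Equiv.coe_mulRight, Units.val_mul, map_mul, MulChar.inv_apply, Ring.inverse_unit,
    mul_assoc (h : ZMod q), ← mul_assoc ((u⁻¹ : (ZMod q)ˣ) : ZMod q)]
  simp only [Units.inv_mul, one_mul]
  ring

lemma okc_tw_sum (q : ℕ) [NeZero q] (F : ZMod q → ℂ) (h0 : ∑ j, F j = 0)
    (χ : DirichletCharacter ℂ q) :
    ∑ j, ∑ h : (ZMod q)ˣ, χ h * F (h * j) = 0 := by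
  rw [Finset.sum_comm]
  refine Finset.sum_eq_zero fun h _ => ?_
  rw [← Finset.mul_sum]
  have : ∑ j, F (h * j) = ∑ j, F j := Equiv.sum_comp (Units.mulLeft h) F
  rw [this, h0, mul_zero]

lemma okc_part3a (q : ℕ) [NeZero q] (F : ZMod q → ℂ) (h0 : ∑ j, F j = 0)
    (hL : ∀ h : (ZMod q)ˣ, okcLv q (fun j => F (h * j)) = 0) (a : (ZMod q)ˣ) :
    okcS q (fun j => F (a * j)) = 0 := by
  have h1 : ∀ χ : DirichletCharacter ℂ q,
      ∑ h : (ZMod q)ˣ, χ h * okcS q (fun j => F (h * j)) = 0 := by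
    intro χ
    rw [← okc_S_sum q Finset.univ (fun h : (ZMod q)ˣ => χ h) (fun h j => F (h * j))]
    by_cases hχ : χ = 1
    · apply okc_triv _ _ (okc_tw_sum q F h0 χ)
      intro u j
      rw [okc_tw, hχ]; simp
    · rw [← okc_nontriv q _ (okc_tw_sum q F h0 χ) χ⁻¹ (inv_ne_one.2 hχ) (fun u j => okc_tw q F χ u j),
        okc_Lv_sum]
      simp [hL]
  have := okc_orth q (fun h => okcS q (fun j => F (h * j))) a
  simp only [h1, mul_zero, Finset.sum_const_zero] at this
  refine (mul_eq_zero.1 this.symm).resolve_left ?_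
  exact_mod_cast (Nat.totient_pos.2 (NeZero.pos q)).ne'

lemma okc_part3b (q : ℕ) [NeZero q] (F : ZMod q → ℂ) (h0 : ∑ j, F j = 0)
    (hS : ∀ a : (ZMod q)ˣ, okcS q (fun j => F (a * j)) = 0)
    (h1 : okcLv q (fun j => ∑ h : (ZMod q)ˣ, F (h * j)) = 0) : okcLv q F = 0 := by
  have h1 : ∀ χ : DirichletCharacter ℂ q,
      ∑ h : (ZMod q)ˣ, χ h * okcLv q (fun j => F (h * j)) = 0 := by
    intro χ
    rw [← okc_Lv_sum q Finset.univ (fun h : (ZMod q)ˣ => χ h) (fun h j => F (h * j))]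
    by_cases hχ : χ = 1
    · rw [← h1, hχ]; simp
    · rw [okc_nontriv q _ (okc_tw_sum q F h0 χ) χ⁻¹ (inv_ne_one.2 hχ) (fun u j => okc_tw q F χ u j),
        okc_S_sum]
      simp [hS]
  have := okc_orth q (fun h => okcLv q (fun j => F (h * j))) 1
  simp only [h1, mul_zero, Finset.sum_const_zero, Units.val_one, one_mul] at this
  refine (mul_eq_zero.1 this.symm).resolve_left ?_
  exact_mod_cast (Nat.totient_pos.2 (NeZero.pos q)).ne'

lemma okd_mult_sum (d N : ℕ) (hd : 0 < d) (h : ℕ → ℝ) :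
    ∑ r ∈ (Icc 1 (d * N)).filter (fun r => d ∣ r), h r = ∑ k ∈ Icc 1 N, h (d * k) := by
  have : (Icc 1 (d * N)).filter (fun r => d ∣ r) = (Icc 1 N).image (fun k => d * k) := by
    ext r
    simp only [mem_filter, mem_Icc, mem_image]
    constructor
    · rintro ⟨⟨h1, h2⟩, k, rfl⟩
      refine ⟨k, ⟨?_, Nat.le_of_mul_le_mul_left h2 hd⟩, rfl⟩
      by_contra h
      have : k = 0 := by omega
      subst this; simp at h1
    · rintro ⟨k, ⟨h1, h2⟩, rfl⟩
      exact ⟨⟨Nat.mul_pos hd h1, Nat.mul_le_mul_left _ h2⟩, dvd_mul_right _ _⟩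
  rw [this, Finset.sum_image]
  intro a _ b _ hab
  exact Nat.eq_of_mul_eq_mul_left hd hab

noncomputable def okdE (p b r : ℕ) : ℝ :=
  if r.factorization p < b then (r.factorization p : ℝ) else (b : ℝ) + 1 / ((p : ℝ) - 1)

lemma okd_T (p : ℕ) (hp : p.Prime) (b : ℕ) : ∀ M : ℕ,
    ∑ k ∈ Icc 1 (p ^ b * M), okdE p b k = (p ^ b * M : ℝ) / ((p : ℝ) - 1) := by
  have hp1 : (p : ℝ) - 1 ≠ 0 := by
    have : (1 : ℝ) < p := by exact_mod_cast hp.one_lt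
    linarith
  induction b with
  | zero => intro M; simp [okdE]; field_simp
  | succ b ih =>
    intro M
    have e1 : ∑ k ∈ Icc 1 (p ^ (b + 1) * M), okdE p (b + 1) k =
        ∑ k ∈ (Icc 1 (p * (p ^ b * M))).filter (fun r => p ∣ r), okdE p (b + 1) k := by
      rw [← mul_assoc, ← pow_succ', Finset.sum_filter]
      refine Finset.sum_congr rfl fun k _ => ?_
      split_ifs with h
      · rfl
      · simp [okdE, Nat.factorization_eq_zero_of_not_dvd h]
    rw [e1, okd_mult_sum _ _ hp.pos]
    have e2 : ∀ k ∈ Icc 1 (p ^ b * M), okdE p (b + 1) (p * k) = 1 + okdE p b k := by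
      intro k hk
      have hk0 : k ≠ 0 := by have := (mem_Icc.1 hk).1; omega
      have : (p * k).factorization p = k.factorization p + 1 := by
        rw [Nat.factorization_mul hp.ne_zero hk0]
        simp [hp.factorization_self, add_comm]
      unfold okdE
      rw [this]
      by_cases h : k.factorization p < b
      · rw [if_pos h, if_pos (by omega)]; push_cast; ring
      · rw [if_neg h, if_neg (by omega)]; push_cast; ring
    rw [Finset.sum_congr rfl e2, Finset.sum_add_distrib, ih M]
    simp
    field_simp
    ring

lemma okd_E_sum (q p e : ℕ) (hq : 0 < q) (hp : p.Prime) (he : e ∣ q) :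
    ∑ r ∈ (Icc 1 q).filter (fun r => e ∣ r), okdE p (q.factorization p) r =
      (q : ℝ) / e * (e.factorization p + 1 / ((p : ℝ) - 1)) := by
  obtain ⟨N, rfl⟩ := he
  have he0 : 0 < e := Nat.pos_of_mul_pos_right hq
  have hN : 0 < N := Nat.pos_of_mul_pos_left hq
  rw [okd_mult_sum _ _ he0, Nat.factorization_mul he0.ne' hN.ne']
  have e2 : ∀ k ∈ Icc 1 N, okdE p ((e.factorization + N.factorization) p) (e * k) =
      e.factorization p + okdE p (N.factorization p) k := by
    intro k hk
    have hk0 : k ≠ 0 := by have := (mem_Icc.1 hk).1; omega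
    unfold okdE
    rw [Nat.factorization_mul he0.ne' hk0, Finsupp.add_apply, Finsupp.add_apply]
    by_cases h : k.factorization p < N.factorization p
    · rw [if_pos h, if_pos (by omega)]; push_cast; ring
    · rw [if_neg h, if_neg (by omega)]; push_cast; ring
  rw [Finset.sum_congr rfl e2, Finset.sum_add_distrib]
  have h3 := okd_T p hp (N.factorization p) (N / p ^ N.factorization p)
  rw [Nat.ordProj_mul_ordCompl_eq_self N p] at h3
  have h4 : ((p : ℝ) ^ N.factorization p * ((N / p ^ N.factorization p : ℕ) : ℝ)) = N := by
    exact_mod_cast Nat.ordProj_mul_ordCompl_eq_self N p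
  rw [h3, h4]
  have : (e : ℝ) ≠ 0 := by exact_mod_cast he0.ne'
  simp
  field_simp

lemma okd_log_indep (S : Finset ℕ) (hS : ∀ p ∈ S, p.Prime) (c : ℕ → ℚ)
    (h : ∑ p ∈ S, (c p : ℝ) * Real.log p = 0) : ∀ p ∈ S, c p = 0 := by
  set D : ℕ := ∏ p ∈ S, (c p).den with hD
  have hD0 : D ≠ 0 := Finset.prod_ne_zero_iff.2 fun p _ => (c p).den_nz
  have hz : ∀ p ∈ S, ∃ z : ℤ, (z : ℚ) = D * c p := by
    intro p hp
    obtain ⟨k, hk⟩ : (c p).den ∣ D := Finset.dvd_prod_of_mem _ hp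
    refine ⟨k * (c p).num, ?_⟩
    rw [hk]
    push_cast
    have := Rat.mul_den_eq_num (c p)
    rw [← this]; ring
  choose! z hz using hz
  have hz1 : ∑ p ∈ S, (z p : ℝ) * Real.log p = 0 := by
    have : ∑ p ∈ S, (z p : ℝ) * Real.log p = D * ∑ p ∈ S, (c p : ℝ) * Real.log p := by
      rw [Finset.mul_sum]
      refine Finset.sum_congr rfl fun p hp => ?_
      have : (z p : ℝ) = D * c p := by exact_mod_cast hz p hp
      rw [this]; ring
    rw [this, h, mul_zero]
  have hz2 : ∑ p ∈ S, ((z p).toNat : ℝ) * Real.log p = ∑ p ∈ S, ((-z p).toNat : ℝ) * Real.log p := by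
    rw [← sub_eq_zero, ← Finset.sum_sub_distrib, ← hz1]
    refine Finset.sum_congr rfl fun p _ => ?_
    rw [← sub_mul]
    congr 1
    have := Int.toNat_sub_toNat_neg (z p)
    exact_mod_cast this
  have hexp : ∀ a : ℕ → ℕ, Real.log ((∏ p ∈ S, p ^ a p : ℕ) : ℝ) = ∑ p ∈ S, (a p : ℝ) * Real.log p := by
    intro a
    push_cast
    rw [Real.log_prod]
    · simp [Real.log_pow]
    · intro p hp
      have := (hS p hp).ne_zero
      positivity
  have hpos : ∀ a : ℕ → ℕ, 0 < ∏ p ∈ S, p ^ a p := fun a =>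
    Finset.prod_pos fun p hp => pow_pos (hS p hp).pos _
  have hN : ∏ p ∈ S, p ^ (z p).toNat = ∏ p ∈ S, p ^ (-z p).toNat := by
    have h1 : Real.log ((∏ p ∈ S, p ^ (z p).toNat : ℕ) : ℝ) =
        Real.log ((∏ p ∈ S, p ^ (-z p).toNat : ℕ) : ℝ) := by
      rw [hexp (fun p => (z p).toNat), hexp (fun p => (-z p).toNat), hz2]
    have h2 := Real.log_injOn_pos (Set.mem_Ioi.2 (by exact_mod_cast hpos _))
      (Set.mem_Ioi.2 (by exact_mod_cast hpos _)) h1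
    exact_mod_cast h2
  have hfac : ∀ a : ℕ → ℕ, ∀ p ∈ S, (∏ r ∈ S, r ^ a r).factorization p = a p := by
    intro a p hp
    rw [Nat.factorization_prod (fun r hr => (pow_pos (hS r hr).pos _).ne'), Finset.sum_apply',
      Finset.sum_eq_single p]
    · rw [(hS p hp).factorization_pow]; simp
    · intro r hr hrp
      rw [(hS r hr).factorization_pow, Finsupp.single_apply, if_neg hrp]
    · exact fun h => absurd hp h
  intro p hp
  have h1 := hfac (fun p => (z p).toNat) p hp
  have h2 := hfac (fun p => (-z p).toNat) p hp
  rw [hN, h2] at h1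
  have h3 : z p = 0 := by omega
  have h4 := hz p hp
  rw [h3] at h4
  have h5 : (D : ℚ) ≠ 0 := by exact_mod_cast hD0
  simpa [h5] using h4.symm

lemma okd_gcd (q : ℕ) [NeZero q] (n : ℕ) :
    ∃ u : (ZMod q)ˣ, (n : ZMod q) = u * ((n.gcd q : ℕ) : ZMod q) := by
  obtain ⟨d, hd, u, hu, h⟩ := ZMod.eq_unit_mul_divisor (n : ZMod q)
  obtain ⟨u, rfl⟩ := hu
  refine ⟨u, ?_⟩
  have h1 : (n : ZMod q) = ((u : ZMod q).val * d : ℕ) := by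
    rw [h]; push_cast; simp
  rw [ZMod.natCast_eq_natCast_iff] at h1
  have h2 := h1.gcd_eq
  have h3 := ZMod.val_coe_unit_coprime u
  rw [Nat.Coprime.gcd_mul_left_cancel _ h3, Nat.gcd_eq_left hd] at h2
  rw [h2, ← h]

lemma okd_gcd_unit (q : ℕ) [NeZero q] (u : (ZMod q)ˣ) (x : ZMod q) :
    ((u : ZMod q) * x).val.gcd q = x.val.gcd q := by
  have h1 : ((((u : ZMod q) * x).val : ℕ) : ZMod q) = ((u : ZMod q).val * x.val : ℕ) := by
    push_cast; simp
  rw [ZMod.natCast_eq_natCast_iff] at h1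
  rw [h1.gcd_eq, Nat.Coprime.gcd_mul_left_cancel _ (ZMod.val_coe_unit_coprime u)]

lemma okd_sumIcc {A : Type*} [AddCommMonoid A] (q : ℕ) [NeZero q] (H : ZMod q → A) :
    ∑ r ∈ Icc 1 q, H (r : ZMod q) = ∑ x, H x := by
  have hq : 0 < q := NeZero.pos q
  have h1 : ∑ r ∈ Icc 1 q, H (r : ZMod q) = ∑ r ∈ range q, H (r : ZMod q) := by
    rw [← Finset.Ico_add_one_right_eq_Icc, Finset.sum_Ico_eq_sum_range]
    obtain ⟨m, rfl⟩ : ∃ m, q = m + 1 := ⟨q - 1, by omega⟩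
    simp only [Nat.add_sub_cancel]
    rw [Finset.sum_range_succ, Finset.sum_range_succ' (fun r => H (r : ZMod (m + 1)))]
    congr 1
    · exact Finset.sum_congr rfl fun i _ => by rw [add_comm 1 i]
    · rw [add_comm 1 m]; simp
  rw [h1]
  refine Finset.sum_bij (fun r _ => (r : ZMod q)) (fun _ _ => mem_univ _) ?_ ?_ (fun _ _ => rfl)
  · intro a ha b hb hab
    rw [ZMod.natCast_eq_natCast_iff] at hab
    have := hab
    unfold Nat.ModEq at this
    rwa [Nat.mod_eq_of_lt (mem_range.1 ha), Nat.mod_eq_of_lt (mem_range.1 hb)] at this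
  · intro x _
    exact ⟨x.val, mem_range.2 (ZMod.val_lt x), by simp⟩

lemma okd_G (q : ℕ) [NeZero q] (Φ : ZMod q → ℚ) (hΦ : ∀ (u : (ZMod q)ˣ) j, Φ (u * j) = Φ j) :
    ∃ G : ℕ → ℚ, ∀ n : ℕ, n ≠ 0 → Φ n = ∑ e ∈ q.divisors.filter (fun e => e ∣ n), G e := by
  let G : ℕ → ℚ := fun n => ∑ x ∈ n.divisorsAntidiagonal,
    (ArithmeticFunction.moebius x.fst : ℚ) * Φ (x.snd : ZMod q)
  have hG := (ArithmeticFunction.sum_eq_iff_sum_mul_moebius_eq (f := G)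
    (g := fun n : ℕ => Φ (n : ZMod q))).2 (fun n _ => rfl)
  refine ⟨G, fun n hn => ?_⟩
  obtain ⟨u, hu⟩ := okd_gcd q n
  rw [hu, hΦ, ← hG (n.gcd q) (Nat.gcd_pos_of_pos_right _ (NeZero.pos q))]
  refine Finset.sum_congr ?_ fun _ _ => rfl
  ext e
  simp only [Nat.mem_divisors, mem_filter, Nat.dvd_gcd_iff]
  have := NeZero.ne q
  constructor
  · rintro ⟨⟨h1, h2⟩, h3⟩; exact ⟨⟨h2, this⟩, h1⟩
  · rintro ⟨⟨h1, h2⟩, h3⟩; exact ⟨⟨h3, h1⟩, Nat.gcd_ne_zero_right this⟩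

lemma okd_LS (q : ℕ) [NeZero q] (Φ : ZMod q → ℂ) (G : ℕ → ℂ)
    (hG : ∀ n : ℕ, n ≠ 0 → Φ n = ∑ e ∈ q.divisors.filter (fun e => e ∣ n), G e)
    (s : ℝ) (hs : 1 < s) :
    LSeries (fun n : ℕ => Φ n) s =
      (∑ e ∈ q.divisors, G e * (e : ℂ) ^ (-(s : ℂ))) * riemannZeta (s : ℂ) := by
  let G' : ℕ → ℂ := fun e => if e ∈ q.divisors then G e else 0
  have h1 : LSeries G' s = ∑ e ∈ q.divisors, G e * (e : ℂ) ^ (-(s : ℂ)) := by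
    unfold LSeries
    rw [tsum_eq_sum (s := q.divisors)]
    · refine Finset.sum_congr rfl fun e he => ?_
      have : e ≠ 0 := (Nat.pos_of_mem_divisors he).ne'
      rw [LSeries.term_of_ne_zero this, Complex.cpow_neg, div_eq_mul_inv]
      simp only [G', if_pos he]
    · intro e he
      simp only [LSeries.term, G', if_neg he, zero_div, ite_self]
  rw [← LSeries_one_eq_riemannZeta (by simpa using hs), ← h1, ← LSeries_convolution']
  · refine LSeries_congr (fun {n} hn => ?_) _
    rw [LSeries.convolution_def, hG n hn]
    change _ = ∑ p ∈ n.divisorsAntidiagonal, G' p.1 * (1 : ℕ → ℂ) p.2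
    rw [Nat.sum_divisorsAntidiagonal (fun a b => G' a * (1 : ℕ → ℂ) b)]
    simp only [G', Pi.one_apply, mul_one]
    rw [← Finset.sum_filter]
    refine Finset.sum_congr ?_ fun _ _ => rfl
    ext e
    simp [hn, and_comm]
  · refine LSeriesSummable_of_bounded_of_one_lt_re (m := ∑ e ∈ q.divisors, ‖G e‖) ?_
      (by simpa using hs)
    intro n _
    by_cases h : n ∈ q.divisors
    · simp only [G', h, if_true]
      exact Finset.single_le_sum (f := fun e => ‖G e‖) (fun _ _ => norm_nonneg _) h
    · simp only [G', h, if_false, norm_zero]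
      exact Finset.sum_nonneg fun _ _ => norm_nonneg _
  · exact LSeriesSummable_of_bounded_of_one_lt_re (m := 1) (fun n _ => by simp) (by simpa using hs)

lemma okd_Lv (q : ℕ) [NeZero q] (Φ : ZMod q → ℂ) (h0 : ∑ j, Φ j = 0) (G : ℕ → ℂ)
    (hG : ∀ n : ℕ, n ≠ 0 → Φ n = ∑ e ∈ q.divisors.filter (fun e => e ∣ n), G e)
    (hG0 : ∑ e ∈ q.divisors, G e / e = 0) :
    okcLv q Φ = q * ∑ e ∈ q.divisors, G e / e * (Real.log e : ℂ) := by
  let P : ℂ → ℂ := fun s => ∑ e ∈ q.divisors, G e * (e : ℂ) ^ (-s)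
  have hP1 : P 1 = 0 := by
    rw [← hG0]
    refine Finset.sum_congr rfl fun e he => ?_
    rw [Complex.cpow_neg_one, div_eq_mul_inv]
  have hd : HasDerivAt P (-∑ e ∈ q.divisors, G e / e * (Real.log e : ℂ)) 1 := by
    rw [← Finset.sum_neg_distrib]
    refine HasDerivAt.fun_sum fun e he => ?_
    have he0 : (e : ℂ) ≠ 0 := by exact_mod_cast (Nat.pos_of_mem_divisors he).ne'
    have := ((hasDerivAt_neg (1 : ℂ)).const_cpow (c := (e : ℂ)) (Or.inl he0)).const_mul (G e)
    have e2 : G e * ((e : ℂ) ^ (-1 : ℂ) * Complex.log e * -1) = -(G e / e * (Real.log e : ℂ)) := by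
      rw [Complex.cpow_neg_one, Complex.ofReal_log (by positivity)]
      simp
      ring
    rw [e2] at this
    exact this
  have t1 := (hd.tendsto_slope.mul riemannZeta_residue_one).comp okc_real_ne
  have t2 := t1.congr' (f₂ := fun s : ℝ => LSeries (fun n : ℕ => Φ n) s) (by
    filter_upwards [self_mem_nhdsWithin] with s hs
    have hs' : (1 : ℝ) < s := hs
    rw [okd_LS q Φ G hG s hs]
    have : (s : ℂ) - 1 ≠ 0 := by
      rw [sub_ne_zero]; exact_mod_cast hs'.ne'
    simp only [Function.comp, slope_def_field, hP1, sub_zero]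
    change P s / (s - 1) * ((s - 1) * riemannZeta s) = P s * riemannZeta s
    field_simp)
  have e := tendsto_nhds_unique (okc_LS_lim q Φ h0) t2
  have hq : (q : ℂ) ≠ 0 := NeZero.ne _
  rw [mul_one] at e
  have e3 : okcLv q Φ = q * ((q : ℂ)⁻¹ * okcLv q Φ) := by field_simp
  rw [e3]
  congr 1
  linear_combination -e

lemma okd_part4 (q : ℕ) [NeZero q] (Φ : ZMod q → ℚ) (hΦ : ∀ (u : (ZMod q)ˣ) j, Φ (u * j) = Φ j)
    (h0 : ∑ j, Φ j = 0) :
    okcLv q (fun j => (Φ j : ℂ)) = 0 ↔ ∀ p : ℕ, p.Prime → p ∣ q →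
      ∑ r ∈ Icc 1 q, (Φ (r : ZMod q) : ℝ) * okdE p (q.factorization p) r = 0 := by
  obtain ⟨G, hG⟩ := okd_G q Φ hΦ
  have hq : (q : ℝ) ≠ 0 := NeZero.ne _
  have hqpos : 0 < q := NeZero.pos q
  -- swap sums
  have hswap : ∀ w : ℕ → ℝ, ∑ r ∈ Icc 1 q, (Φ (r : ZMod q) : ℝ) * w r =
      ∑ e ∈ q.divisors, (G e : ℝ) * ∑ r ∈ (Icc 1 q).filter (fun r => e ∣ r), w r := by
    intro w
    simp_rw [Finset.mul_sum]
    have : ∀ r ∈ Icc 1 q, (Φ (r : ZMod q) : ℝ) * w r =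
        ∑ e ∈ q.divisors, if e ∣ r then (G e : ℝ) * w r else 0 := by
      intro r hr
      rw [hG r (by have := (mem_Icc.1 hr).1; omega), ← Finset.sum_filter]
      push_cast
      rw [Finset.sum_mul]
    rw [Finset.sum_congr rfl this, Finset.sum_comm]
    refine Finset.sum_congr rfl fun e _ => ?_
    rw [Finset.sum_filter]
  have hG0 : ∑ e ∈ q.divisors, (G e : ℝ) / e = 0 := by
    have h1 := hswap (fun _ => 1)
    have h2 : ∑ r ∈ Icc 1 q, (Φ (r : ZMod q) : ℝ) * 1 = 0 := by
      simp only [mul_one]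
      rw [okd_sumIcc q (fun x => (Φ x : ℝ))]
      exact_mod_cast h0
    rw [h2] at h1
    have h3 : ∀ e ∈ q.divisors, (G e : ℝ) * ∑ r ∈ (Icc 1 q).filter (fun r => e ∣ r), (1 : ℝ) =
        q * ((G e : ℝ) / e) := by
      intro e he
      have he0 := Nat.pos_of_mem_divisors he
      obtain ⟨N, hN⟩ := (Nat.mem_divisors.1 he).1
      have h4 := okd_mult_sum e N he0 (fun _ => 1)
      rw [← hN] at h4
      rw [h4]
      have : (e : ℝ) ≠ 0 := by exact_mod_cast he0.ne'
      have h5 : (q : ℝ) = e * N := by exact_mod_cast hN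
      rw [h5]
      simp
      field_simp
    rw [Finset.sum_congr rfl h3, ← Finset.mul_sum] at h1
    exact (mul_eq_zero.1 h1.symm).resolve_left hq
  let c : ℕ → ℚ := fun p => ∑ e ∈ q.divisors, G e / e * e.factorization p
  have hc : ∀ p : ℕ, p.Prime →
      ∑ r ∈ Icc 1 q, (Φ (r : ZMod q) : ℝ) * okdE p (q.factorization p) r = q * c p := by
    intro p hp
    rw [hswap]
    have h3 : ∀ e ∈ q.divisors, (G e : ℝ) *
        ∑ r ∈ (Icc 1 q).filter (fun r => e ∣ r), okdE p (q.factorization p) r =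
        q * ((G e : ℝ) / e * e.factorization p) + (q * (1 / ((p : ℝ) - 1))) * ((G e : ℝ) / e) := by
      intro e he
      rw [okd_E_sum q p e hqpos hp (Nat.mem_divisors.1 he).1]
      ring
    rw [Finset.sum_congr rfl h3, Finset.sum_add_distrib, ← Finset.mul_sum, ← Finset.mul_sum, hG0]
    simp [c]
  have hlog : ∑ e ∈ q.divisors, (G e : ℝ) / e * Real.log e =
      ∑ p ∈ q.primeFactors, (c p : ℝ) * Real.log p := by
    simp only [c]
    push_cast
    simp_rw [Finset.sum_mul]
    rw [Finset.sum_comm]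
    refine Finset.sum_congr rfl fun e he => ?_
    simp_rw [mul_assoc]
    rw [← Finset.mul_sum]
    have he1 := (Nat.mem_divisors.1 he).1
    rw [Real.log_nat_eq_sum_factorization, Finsupp.sum,
      Finset.sum_subset (s₁ := e.factorization.support) (s₂ := q.primeFactors)]
    · rw [Nat.support_factorization]
      exact Nat.primeFactors_mono he1 hqpos.ne'
    · intro p _ hp
      simp [Finsupp.notMem_support_iff.1 hp]
  have hLv := okd_Lv q (fun j => (Φ j : ℂ)) (by exact_mod_cast h0) (fun e => (G e : ℂ))
    (fun n hn => by
      simp only [hG n hn]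
      push_cast; rfl)
    (by
      have : ((∑ e ∈ q.divisors, (G e : ℝ) / e : ℝ) : ℂ) = 0 := by rw [hG0]; simp
      push_cast at this
      exact this)
  have hLv2 : okcLv q (fun j => (Φ j : ℂ)) =
      q * ((∑ p ∈ q.primeFactors, (c p : ℝ) * Real.log p : ℝ) : ℂ) := by
    rw [hLv, ← hlog]
    push_cast
    rfl
  have hqc : (q : ℂ) ≠ 0 := NeZero.ne _
  constructor
  · intro h p hp hpq
    rw [hLv2] at h
    have h1 := (mul_eq_zero.1 h).resolve_left hqc
    have h2 := okd_log_indep q.primeFactors (fun p hp => Nat.prime_of_mem_primeFactors hp) c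
      (by exact_mod_cast h1) p (Nat.mem_primeFactors.2 ⟨hp, hpq, hqpos.ne'⟩)
    rw [hc p hp, h2]; simp
  · intro h
    rw [hLv2, Finset.sum_eq_zero]
    · simp
    · intro p hp
      have hp1 := Nat.prime_of_mem_primeFactors hp
      have h1 := h p hp1 (Nat.dvd_of_mem_primeFactors hp)
      rw [hc p hp1] at h1
      rw [(mul_eq_zero.1 h1).resolve_left hq, zero_mul]

lemma oke_per (q : ℕ) (f : ℕ → ℚ) (hper : ∀ n : ℕ, 1 ≤ n → f (n + q) = f n) (r k : ℕ)
    (hr : 1 ≤ r) : f (r + k * q) = f r := by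
  induction k with
  | zero => simp
  | succ k ih => rw [← ih, ← hper (r + k * q) (by omega)]; congr 1; ring

lemma oke_F (q : ℕ) [NeZero q] (f : ℕ → ℚ) (hper : ∀ n : ℕ, 1 ≤ n → f (n + q) = f n) :
    ∃ F : ZMod q → ℚ, ∀ n : ℕ, 1 ≤ n → f n = F n := by
  refine ⟨fun x => f (if x.val = 0 then q else x.val), fun n hn => ?_⟩
  simp only [ZMod.val_natCast]
  have h := Nat.mod_add_div n q
  split_ifs with h0
  · rw [h0, zero_add] at h
    have hk : n / q ≠ 0 := by
      intro h1; rw [h1, mul_zero] at h; omega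
    obtain ⟨k, hk⟩ := Nat.exists_eq_succ_of_ne_zero hk
    rw [hk] at h
    rw [← h, ← oke_per q f hper q k (NeZero.pos q)]
    congr 1
    simp [Nat.succ_eq_add_one]; ring
  · conv_lhs => rw [← h]
    rw [mul_comm, oke_per q f hper _ _ (by omega)]

lemma oke_E_gcd (q : ℕ) [NeZero q] (p r : ℕ) (hr : r ≠ 0) :
    okdE p (q.factorization p) r = okdE p (q.factorization p) (r.gcd q) := by
  unfold okdE
  rw [Nat.factorization_gcd hr (NeZero.ne q), Finsupp.inf_apply]
  by_cases h : r.factorization p < q.factorization p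
  · rw [if_pos h, inf_eq_left.2 h.le, if_pos h]
  · rw [if_neg h, inf_eq_right.2 (by omega), if_neg (lt_irrefl _)]

lemma oke_avg (q : ℕ) [NeZero q] (F : ZMod q → ℚ) (p : ℕ) :
    ∑ r ∈ Icc 1 q, ((∑ h : (ZMod q)ˣ, F (h * (r : ZMod q)) : ℚ) : ℝ) *
        okdE p (q.factorization p) r =
      q.totient * ∑ r ∈ Icc 1 q, (F (r : ZMod q) : ℝ) * okdE p (q.factorization p) r := by
  let E : ZMod q → ℝ := fun x => okdE p (q.factorization p) (x.val.gcd q)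
  have hE : ∀ r ∈ Icc 1 q, okdE p (q.factorization p) r = E r := by
    intro r hr
    rw [oke_E_gcd q p r (by have := (mem_Icc.1 hr).1; omega)]
    simp only [E, ZMod.val_natCast]
    rw [← Nat.gcd_rec, Nat.gcd_comm]
  have h1 : ∀ H : ZMod q → ℚ, ∑ r ∈ Icc 1 q, (H (r : ZMod q) : ℝ) * okdE p (q.factorization p) r =
      ∑ x, (H x : ℝ) * E x := by
    intro H
    rw [← okd_sumIcc q (fun x => (H x : ℝ) * E x)]
    exact Finset.sum_congr rfl fun r hr => by rw [hE r hr]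
  rw [h1 (fun x => ∑ h : (ZMod q)ˣ, F (h * x)), h1 F]
  push_cast
  simp_rw [Finset.sum_mul]
  rw [Finset.sum_comm]
  have h2 : ∀ h : (ZMod q)ˣ, ∑ x, (F (h * x) : ℝ) * E x = ∑ x, (F x : ℝ) * E x := by
    intro h
    rw [← Equiv.sum_comp (Units.mulLeft h) (fun x => (F x : ℝ) * E x)]
    refine Finset.sum_congr rfl fun x _ => ?_
    simp only [Units.mulLeft_apply, E, okd_gcd_unit]
  simp only [h2]
  simp [ZMod.card_units_eq_totient]

theorem okada_criterion (q : ℕ) (hq : 2 ≤ q) (f : ℕ → ℚ)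
    (hper : ∀ n : ℕ, 1 ≤ n → f (n + q) = f n)
    (hsum0 : ∑ a ∈ Finset.Icc 1 q, f a = 0)
    (L : ℝ)
    (hL : Tendsto (fun N : ℕ => ∑ n ∈ Finset.Icc 1 N, (f n : ℝ) / n) atTop (nhds L)) :
    L = 0 ↔
      ((∀ a : ℕ, 1 ≤ a → a < q → Nat.gcd a q = 1 →
        ∑' m : {b : ℕ // 0 < b ∧ ∀ p : ℕ, p.Prime → p ∣ b → p ∣ q},
          (f (a * (m : ℕ)) : ℝ) / ((m : ℕ) : ℝ) = 0) ∧
       (∀ p : ℕ, p.Prime → p ∣ q →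
        ∑ r ∈ (Finset.Icc 1 q).filter (fun r => 1 < Nat.gcd r q),
          (f r : ℝ) * (if r.factorization p < q.factorization p
            then (r.factorization p : ℝ)
            else (q.factorization p : ℝ) + 1 / ((p : ℝ) - 1)) = 0)) := by
  have : NeZero q := ⟨by omega⟩
  obtain ⟨F, hF⟩ := oke_F q f hper
  have h0 : ∑ j, F j = 0 := by
    rw [← okd_sumIcc q F, ← hsum0]
    exact Finset.sum_congr rfl fun r hr => (hF r (mem_Icc.1 hr).1).symm
  let Fc : ZMod q → ℂ := fun j => (F j : ℂ)
  have h0c : ∑ j, Fc j = 0 := by simp only [Fc]; exact_mod_cast h0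
  have hLL : (L : ℂ) = -(q : ℂ)⁻¹ * okcLv q Fc := by
    have t1 : Tendsto (fun N : ℕ => ((∑ n ∈ Icc 1 N, (f n : ℝ) / (n : ℝ) : ℝ) : ℂ)) atTop
        (nhds (L : ℂ)) := (Complex.continuous_ofReal.tendsto L).comp hL
    refine tendsto_nhds_unique t1 ((okc_lim q Fc h0c).congr fun N => ?_)
    push_cast
    refine Finset.sum_congr rfl fun n hn => ?_
    rw [hF n (mem_Icc.1 hn).1]
  have hqc : (q : ℂ) ≠ 0 := NeZero.ne _
  have hL0 : L = 0 ↔ okcLv q Fc = 0 := by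
    rw [← Complex.ofReal_eq_zero, hLL, mul_eq_zero]
    simp [hqc]
  let Φ : ZMod q → ℚ := fun j => ∑ h : (ZMod q)ˣ, F (h * j)
  have hΦu : ∀ (u : (ZMod q)ˣ) j, Φ (u * j) = Φ j := by
    intro u j
    simp only [Φ]
    rw [← Equiv.sum_comp (Equiv.mulRight u) (fun h : (ZMod q)ˣ => F (h * j))]
    refine Finset.sum_congr rfl fun h _ => ?_
    rw [Equiv.coe_mulRight, Units.val_mul, mul_assoc]
  have hΦ0 : ∑ j, Φ j = 0 := by
    simp only [Φ]
    rw [Finset.sum_comm]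
    refine Finset.sum_eq_zero fun h _ => ?_
    rw [← h0]
    exact Equiv.sum_comp (Units.mulLeft h) F
  have hΦc : okcLv q (fun j => (Φ j : ℂ)) = okcLv q (fun j => ∑ h : (ZMod q)ˣ, Fc (h * j)) := by
    congr 1
    ext j
    simp [Φ, Fc]
  have hp4 := okd_part4 q Φ hΦu hΦ0
  have hii : ∀ p : ℕ, p.Prime → p ∣ q →
      (∑ r ∈ Icc 1 q, (Φ (r : ZMod q) : ℝ) * okdE p (q.factorization p) r = 0 ↔
      ∑ r ∈ (Icc 1 q).filter (fun r => 1 < Nat.gcd r q),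
            (f r : ℝ) *
              (if r.factorization p < q.factorization p then (r.factorization p : ℝ)
               else (q.factorization p : ℝ) + 1 / ((p : ℝ) - 1)) = 0) := by
    intro p hp hpq
    rw [oke_avg q F p]
    have ht : (q.totient : ℝ) ≠ 0 := by exact_mod_cast (Nat.totient_pos.2 (NeZero.pos q)).ne'
    rw [mul_eq_zero, or_iff_right ht, Finset.sum_filter]
    have : ∀ r ∈ Icc 1 q, (F (r : ZMod q) : ℝ) * okdE p (q.factorization p) r =
        if 1 < Nat.gcd r q then (f r : ℝ) *
              (if r.factorization p < q.factorization p then (r.factorization p : ℝ)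
               else (q.factorization p : ℝ) + 1 / ((p : ℝ) - 1)) else 0 := by
      intro r hr
      rw [← hF r (mem_Icc.1 hr).1]
      split_ifs with h1 h2
      · rw [okdE, if_pos h2]
      · rw [okdE, if_neg h2]
      · have hg : r.gcd q = 1 := by
          have := Nat.gcd_pos_of_pos_right r (NeZero.pos q)
          omega
        have hnd : ¬ p ∣ r := fun h => by
          have := Nat.dvd_gcd h hpq
          rw [hg] at this
          exact hp.ne_one (Nat.dvd_one.1 this)
        have hqf : 0 < q.factorization p := hp.factorization_pos_of_dvd (NeZero.ne q) hpq
        rw [okdE, Nat.factorization_eq_zero_of_not_dvd hnd, if_pos hqf]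
        simp
    rw [Finset.sum_congr rfl this]
  have hi : ∀ (a : ℕ) (u : (ZMod q)ˣ), 1 ≤ a → (a : ZMod q) = u →
      okcS q (fun j => Fc (u * j)) =
      ((∑' m : {b : ℕ // 0 < b ∧ ∀ p : ℕ, p.Prime → p ∣ b → p ∣ q},
            (f (a * (m : ℕ)) : ℝ) / ((m : ℕ) : ℝ) : ℝ) : ℂ) := by
    intro a u ha hu
    rw [Complex.ofReal_tsum]
    unfold okcS
    refine tsum_congr fun m => ?_
    rw [hF (a * (m : ℕ)) (Nat.mul_pos ha m.2.1)]
    simp only [Fc]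
    push_cast
    rw [hu]
  rw [hL0]
  constructor
  · intro h
    have hg : ∀ u : (ZMod q)ˣ, okcLv q (fun j => Fc (u * j)) = 0 := okc_galois q F h
    refine ⟨?_, ?_⟩
    · intro a ha haq hg1
      have := okc_part3a q Fc h0c hg (ZMod.unitOfCoprime a hg1)
      rw [hi a _ ha (ZMod.coe_unitOfCoprime a hg1).symm] at this
      exact_mod_cast this
    · intro p hp hpq
      rw [← hii p hp hpq]
      refine hp4.1 ?_ p hp hpq
      rw [hΦc]
      have := okc_Lv_sum q Finset.univ (fun _ : (ZMod q)ˣ => (1 : ℂ)) (fun u j => Fc (u * j))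
      simp only [one_mul, hg, Finset.sum_const_zero] at this
      exact this
  · rintro ⟨h1, h2⟩
    refine okc_part3b q Fc h0c ?_ ?_
    · intro u
      have hc := ZMod.val_coe_unit_coprime u
      have hpos : 1 ≤ (u : ZMod q).val := by
        by_contra h
        have h3 : (u : ZMod q).val = 0 := by omega
        rw [h3] at hc
        simp at hc
        omega
      rw [hi (u : ZMod q).val u hpos (by simp), h1 _ hpos (ZMod.val_lt _) hc]
      simp
    · rw [← hΦc]
      refine hp4.2 fun p hp hpq => ?_
      rw [hii p hp hpq]
      exact h2 p hp hpq
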